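/- arXiv:2503.11161 — 8 statements merged into one kernel-verified Lean document; each statement's English description precedes it below -/
import Mathlib

section
/- Let H be a real Hilbert space and suppose H × H = H♯ ⊕ H♭ is a direct sum decomposition into closed subspaces H♯ and H♭, both of which are Lagrange subspaces of H × H. Let L ⊆ H × H be a closed isotropic subspace such that the projector Π♯ onto H♯ along H♭, restricted to L, is a bijection from L onto H♯. Then L is a Lagrange subspace. -/
/-! Setting: `H` is a real Hilbert space; on `H × H` (with the product inner product,
realized as `WithLp 2 (H × H)`) the complex structure is `J (v, η) := (-η, v)`;
a closed subspace `L` is isotropic if `J L ⊆ Lᗮ` and Lagrange if `J L = Lᗮ`. -/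

/-- The complex structure `J (v, η) = (-η, v)` on `H × H`. -/
noncomputable def Jmap (H : Type*) [NormedAddCommGroup H] [InnerProductSpace ℝ H] :
    WithLp 2 (H × H) →ₗ[ℝ] WithLp 2 (H × H) :=
  (WithLp.linearEquiv 2 ℝ (H × H)).symm.toLinearMap ∘ₗ
    ((LinearMap.prod (-(LinearMap.snd ℝ H H)) (LinearMap.fst ℝ H H)) ∘ₗ
      (WithLp.linearEquiv 2 ℝ (H × H)).toLinearMap)

/-- A subspace `L ⊆ H × H` is Lagrange if `J L = Lᗮ`. -/
def IsLagrange {H : Type*} [NormedAddCommGroup H] [InnerProductSpace ℝ H]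
    (L : Submodule ℝ (WithLp 2 (H × H))) : Prop :=
  L.map (Jmap H) = Lᗮ

/-- A subspace `L ⊆ H × H` is isotropic if `J L ⊆ Lᗮ`. -/
def IsIsotropic {H : Type*} [NormedAddCommGroup H] [InnerProductSpace ℝ H]
    (L : Submodule ℝ (WithLp 2 (H × H))) : Prop :=
  L.map (Jmap H) ≤ Lᗮ

theorem Jmap_Jmap {H : Type*} [NormedAddCommGroup H] [InnerProductSpace ℝ H]
    (x : WithLp 2 (H × H)) : Jmap H (Jmap H x) = -x := by
  apply (WithLp.linearEquiv 2 ℝ (H × H)).injective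
  ext <;> simp [Jmap]

/-- Suppose `H × H = Hs ⊕ Hb` is a direct sum decomposition into
closed subspaces, both Lagrange, and `Pj` is the (bounded) projector onto `Hs` along
`Hb`.  If `L` is a closed isotropic subspace such that `Pj` restricted to `L` is a
bijection from `L` onto `Hs`, then `L` is Lagrange. -/
theorem stmt3 {H : Type*} [NormedAddCommGroup H] [InnerProductSpace ℝ H] [CompleteSpace H]
    (Hs Hb : Submodule ℝ (WithLp 2 (H × H)))
    (hHsC : IsClosed (Hs : Set (WithLp 2 (H × H))))
    (hHbC : IsClosed (Hb : Set (WithLp 2 (H × H))))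
    (hdisj : Hs ⊓ Hb = ⊥) (hspan : Hs ⊔ Hb = ⊤)
    (hHsL : IsLagrange Hs) (hHbL : IsLagrange Hb)
    (Pj : WithLp 2 (H × H) →L[ℝ] WithLp 2 (H × H))
    (hPj_mem : ∀ x, Pj x ∈ Hs) (hPj_id : ∀ x ∈ Hs, Pj x = x) (hPj_ker : ∀ x ∈ Hb, Pj x = 0)
    (L : Submodule ℝ (WithLp 2 (H × H)))
    (hLC : IsClosed (L : Set (WithLp 2 (H × H)))) (hLiso : IsIsotropic L)
    (hbij : Set.BijOn Pj (L : Set (WithLp 2 (H × H))) (Hs : Set (WithLp 2 (H × H)))) :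
    IsLagrange L := by
  have hJJ : ∀ x, Jmap H (Jmap H x) = -x := fun x => Jmap_Jmap x
  have hinj : Function.Injective (Jmap H) := by
    intro x y hxy
    have h := congrArg (Jmap H) hxy
    rw [hJJ, hJJ] at h
    exact neg_injective h
  have hker : ∀ x, Pj x = 0 → x ∈ Hb := by
    intro x hx
    have hx' : x ∈ Hs ⊔ Hb := by rw [hspan]; trivial
    obtain ⟨s, hs, b, hb, rfl⟩ := Submodule.mem_sup.1 hx'
    rw [map_add, hPj_id s hs, hPj_ker b hb, add_zero] at hx
    rw [hx, zero_add]; exact hb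
  refine le_antisymm hLiso ?_
  intro u hu
  have hu' := (Submodule.mem_orthogonal L u).1 hu
  have hJw : Jmap H (-(Jmap H u)) = u := by rw [map_neg, hJJ, neg_neg]
  obtain ⟨l, hl, hlw⟩ := hbij.surjOn (hPj_mem (-(Jmap H u)))
  have hb : -(Jmap H u) - l ∈ Hb := hker _ (by rw [map_sub, hlw, sub_self])
  have hbs : -(Jmap H u) - l ∈ Hs := by
    have h1 : Jmap H (-(Jmap H u) - l) ∈ Hsᗮ := by
      rw [Submodule.mem_orthogonal]
      intro s hs
      obtain ⟨m, hm, rfl⟩ := hbij.surjOn hs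
      have h2 : m - Pj m ∈ Hb := hker _ (by rw [map_sub, hPj_id _ (hPj_mem m), sub_self])
      have h3 : Jmap H (-(Jmap H u) - l) ∈ Hbᗮ := by
        have h5 : Hb.map (Jmap H) = Hbᗮ := hHbL
        rw [← h5]; exact Submodule.mem_map_of_mem hb
      have h4 := (Submodule.mem_orthogonal _ _).1 h3 _ h2
      have h6 := (Submodule.mem_orthogonal _ _).1 (hLiso (Submodule.mem_map_of_mem hl)) m hm
      have h7 := hu' m hm
      rw [map_sub, hJw, inner_sub_right, inner_sub_left, inner_sub_left] at h4
      rw [map_sub, hJw, inner_sub_right]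
      linarith
    have h5 : Hs.map (Jmap H) = Hsᗮ := hHsL
    rw [← h5] at h1
    obtain ⟨y, hy, hyx⟩ := h1
    rw [← hinj hyx]; exact hy
  have h0 : -(Jmap H u) - l ∈ Hs ⊓ Hb := ⟨hbs, hb⟩
  rw [hdisj, Submodule.mem_bot, sub_eq_zero] at h0
  exact ⟨-(Jmap H u), by rw [h0]; exact hl, hJw⟩
end

section
/- Let H be a real Hilbert space, let L and L₀ be Lagrange subspaces of H × H, and let Π_L denote the orthogonal projection of H × H onto L. If Π_L restricted to L₀ is injective, then Π_L(L₀) is dense in L. -/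
/-- Let `L`, `L₀` be Lagrange subspaces of `H × H` and let `PL` be the
orthogonal projection onto `L` (characterized by `PL x ∈ L` and `x - PL x ∈ Lᗮ`).
If `PL` restricted to `L₀` is injective, then `PL '' L₀` is dense in `L`. -/
theorem stmt5 {H : Type*} [NormedAddCommGroup H] [InnerProductSpace ℝ H] [CompleteSpace H]
    (L L₀ : Submodule ℝ (WithLp 2 (H × H)))
    (hLC : IsClosed (L : Set (WithLp 2 (H × H))))
    (hL₀C : IsClosed (L₀ : Set (WithLp 2 (H × H))))
    (hL : IsLagrange L) (hL₀ : IsLagrange L₀)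
    (PL : WithLp 2 (H × H) →L[ℝ] WithLp 2 (H × H))
    (hPL_mem : ∀ x, PL x ∈ L) (hPL_orth : ∀ x, x - PL x ∈ Lᗮ)
    (hinj : Set.InjOn PL (L₀ : Set (WithLp 2 (H × H)))) :
    closure (PL '' (L₀ : Set (WithLp 2 (H × H)))) = (L : Set (WithLp 2 (H × H))) := by
  have key : ∀ x ∈ (L₀.map PL.toLinearMap)ᗮ, x ∈ Lᗮ := by
    intro x hx
    have hz : PL x ∈ L₀ᗮ := by
      rw [Submodule.mem_orthogonal']
      intro w hw
      have h1 : inner ℝ (PL x) (w - PL w) = 0 :=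
        (Submodule.mem_orthogonal L _).1 (hPL_orth w) _ (hPL_mem x)
      have h2 : inner ℝ (x - PL x) (PL w) = 0 :=
        (Submodule.mem_orthogonal' L _).1 (hPL_orth x) _ (hPL_mem w)
      have h3 : inner ℝ x (PL w) = 0 :=
        (Submodule.mem_orthogonal' _ _).1 hx _ ⟨w, hw, rfl⟩
      rw [inner_sub_right] at h1
      rw [inner_sub_left] at h2
      linarith
    have hz' := hz
    rw [← show L₀.map (Jmap H) = L₀ᗮ from hL₀] at hz'
    obtain ⟨u, hu, huz⟩ := hz'
    have hJ : Jmap H (PL x) ∈ Lᗮ := by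
      rw [← show L.map (Jmap H) = Lᗮ from hL]
      exact ⟨_, hPL_mem x, rfl⟩
    have hJJ : Jmap H (Jmap H u) = -u := by
      apply (WithLp.linearEquiv 2 ℝ (H × H)).injective
      simp [Jmap]
      rfl
    rw [← huz, hJJ] at hJ
    have huL : u ∈ Lᗮ := by simpa using hJ
    have hPu : PL u = 0 := by
      have h : PL u ∈ Lᗮ := by
        have := Submodule.sub_mem _ huL (hPL_orth u)
        simpa using this
      exact inner_self_eq_zero.1 ((Submodule.mem_orthogonal L _).1 h _ (hPL_mem u))
    have hu0 : u = 0 := hinj hu L₀.zero_mem (by simp [hPu])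
    have hx0 : PL x = 0 := by rw [← huz, hu0, map_zero]
    simpa [hx0] using hPL_orth x
  apply Set.Subset.antisymm
  · apply closure_minimal _ hLC
    rintro _ ⟨w, _, rfl⟩
    exact hPL_mem w
  · intro y hy
    have : y ∈ (L₀.map PL.toLinearMap)ᗮᗮ := by
      rw [Submodule.mem_orthogonal']
      intro x hx
      exact (Submodule.mem_orthogonal L _).1 (key x hx) y hy
    rw [Submodule.orthogonal_orthogonal_eq_closure] at this
    exact this
end

section
/- Let H be an infinite-dimensional separable real Hilbert space and let L be a Lagrange subspace of H × H. Then there exists a Lagrange subspace L₀ of H × H such that the orthogonal projection Π_L of H × H onto L, restricted to L₀, is injective and has dense range in L, but is not surjective onto L. Concretely, if (e_k)_{k≥1} is an orthonormal basis of L and (a_k), (b_k) are real sequences with a_k² + b_k² = 1, a_k > 0 for all k and a_k → 0 as k → ∞, then the closed linear span L₀ of the orthonormal family (a_k e_k + b_k J e_k)_{k≥1} is such a Lagrange subspace. -/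
section helpers
variable {H : Type*} [NormedAddCommGroup H] [InnerProductSpace ℝ H]

theorem Jinner (x y : WithLp 2 (H × H)) :
    inner ℝ (Jmap H x) (Jmap H y) = inner ℝ x y := by
  simp [Jmap, WithLp.prod_inner_apply, add_comm]

theorem JJ (x : WithLp 2 (H × H)) : Jmap H (Jmap H x) = -x := by
  apply (WithLp.linearEquiv 2 ℝ (H × H)).injective
  ext <;> simp [Jmap]

theorem Jskew (x y : WithLp 2 (H × H)) :
    inner ℝ (Jmap H x) y = - inner ℝ x (Jmap H y) := by
  rw [← Jinner x (Jmap H y), JJ, inner_neg_right, neg_neg]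

theorem mem_perp_closure_span {E : Type*} [NormedAddCommGroup E] [InnerProductSpace ℝ E]
    (f : ℕ → E) (x : E) (h : ∀ k, inner ℝ (f k) x = 0) :
    x ∈ (Submodule.span ℝ (Set.range f)).topologicalClosureᗮ := by
  rw [Submodule.orthogonal_closure, Submodule.mem_orthogonal]
  intro u hu
  induction hu using Submodule.span_induction with
  | mem u hu => obtain ⟨k, rfl⟩ := hu; exact h k
  | zero => simp
  | add u v _ _ hu hv => simp [inner_add_left, hu, hv]
  | smul c u _ hu => simp [inner_smul_left, hu]

end helpers

/-- Let `H` be an infinite-dimensional separable real Hilbert space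
and `L` a Lagrange subspace of `H × H`, with orthogonal projection `PL` onto `L`.
Then there exists a Lagrange subspace `L₀` on which `PL` is injective with dense,
but not full, image in `L`.  Concretely, if `(e k)` is an orthonormal basis of `L`
and `a`, `b` are real sequences with `a k ^ 2 + b k ^ 2 = 1`, `a k > 0` and
`a k → 0`, then `L₀ := closure (span (a k • e k + b k • J (e k)))` is such a
Lagrange subspace. -/
theorem stmt6 {H : Type*} [NormedAddCommGroup H] [InnerProductSpace ℝ H] [CompleteSpace H]
    [TopologicalSpace.SeparableSpace H] (hinf : ¬ FiniteDimensional ℝ H)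
    (L : Submodule ℝ (WithLp 2 (H × H)))
    (hLC : IsClosed (L : Set (WithLp 2 (H × H)))) (hL : IsLagrange L)
    (PL : WithLp 2 (H × H) →L[ℝ] WithLp 2 (H × H))
    (hPL_mem : ∀ x, PL x ∈ L) (hPL_orth : ∀ x, x - PL x ∈ Lᗮ)
    (e : ℕ → WithLp 2 (H × H)) (he_on : Orthonormal ℝ e) (he_mem : ∀ k, e k ∈ L)
    (he_total : (Submodule.span ℝ (Set.range e)).topologicalClosure = L)
    (a b : ℕ → ℝ) (hab : ∀ k, a k ^ 2 + b k ^ 2 = 1) (ha_pos : ∀ k, 0 < a k)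
    (ha_lim : Filter.Tendsto a Filter.atTop (nhds 0)) :
    (∃ L₀ : Submodule ℝ (WithLp 2 (H × H)),
      IsClosed (L₀ : Set (WithLp 2 (H × H))) ∧ IsLagrange L₀ ∧
      Set.InjOn PL (L₀ : Set (WithLp 2 (H × H))) ∧
      closure (PL '' (L₀ : Set (WithLp 2 (H × H)))) = (L : Set (WithLp 2 (H × H))) ∧
      ¬ Set.SurjOn PL (L₀ : Set (WithLp 2 (H × H))) (L : Set (WithLp 2 (H × H)))) ∧
    (∀ L₀ : Submodule ℝ (WithLp 2 (H × H)),
      L₀ = (Submodule.span ℝ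
          (Set.range (fun k => a k • e k + b k • Jmap H (e k)))).topologicalClosure →
      IsLagrange L₀ ∧
      Set.InjOn PL (L₀ : Set (WithLp 2 (H × H))) ∧
      closure (PL '' (L₀ : Set (WithLp 2 (H × H)))) = (L : Set (WithLp 2 (H × H))) ∧
      ¬ Set.SurjOn PL (L₀ : Set (WithLp 2 (H × H))) (L : Set (WithLp 2 (H × H)))) := by
  refine (fun h2 => ⟨⟨_, Submodule.isClosed_topologicalClosure _, h2 _ rfl⟩, h2⟩) ?_
  intro L₀ hL₀
  set f : ℕ → WithLp 2 (H × H) := fun k => a k • e k + b k • Jmap H (e k) with hf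
  have hfk : ∀ k, f k = a k • e k + b k • Jmap H (e k) := fun k => rfl
  have hJf : ∀ k, Jmap H (f k) = a k • Jmap H (e k) - b k • e k := by
    intro k
    rw [hfk, map_add, map_smul, map_smul, JJ, smul_neg, sub_eq_add_neg]
  have hJL : ∀ x ∈ L, Jmap H x ∈ Lᗮ := by
    intro x hx
    have : L.map (Jmap H) = Lᗮ := hL
    rw [← this]
    exact Submodule.mem_map_of_mem hx
  have heJ : ∀ j k, inner ℝ (e j) (Jmap H (e k)) = 0 := fun j k =>
    (Submodule.mem_orthogonal _ _).1 (hJL _ (he_mem k)) _ (he_mem j)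
  have hJe : ∀ j k, inner ℝ (Jmap H (e j)) (e k) = 0 := fun j k => by
    rw [real_inner_comm]; exact heJ k j
  have hee : ∀ j k, j ≠ k → inner ℝ (e j) (e k) = 0 := fun j k h => he_on.2 h
  have key : ∀ x, (∀ k, inner ℝ (e k) x = 0) → (∀ k, inner ℝ (Jmap H (e k)) x = 0) → x = 0 := by
    intro x h1 h2
    have hx : x ∈ Lᗮ := by
      rw [← he_total]; exact mem_perp_closure_span e x h1
    have hJx : Jmap H x ∈ Lᗮ := by
      rw [← he_total]
      refine mem_perp_closure_span e _ fun k => ?_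
      have := Jskew (e k) x
      rw [h2 k] at this
      linarith
    have hL' : L.map (Jmap H) = Lᗮ := hL
    have hx' := hx
    rw [← hL'] at hx'
    obtain ⟨l, hl, rfl⟩ := hx'
    rw [JJ] at hJx
    have h0 : inner ℝ l (-l) = 0 := (Submodule.mem_orthogonal _ _).1 hJx l hl
    rw [inner_neg_right, neg_eq_zero, inner_self_eq_zero] at h0
    rw [h0, map_zero]
  have key2 : ∀ x, (∀ k, inner ℝ (f k) x = 0) → (∀ k, inner ℝ (Jmap H (f k)) x = 0) → x = 0 := by
    intro x h1 h2
    have h1' : ∀ k, a k * inner ℝ (e k) x + b k * inner ℝ (Jmap H (e k)) x = 0 := by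
      intro k
      have := h1 k
      rwa [hfk, inner_add_left, real_inner_smul_left, real_inner_smul_left] at this
    have h2' : ∀ k, a k * inner ℝ (Jmap H (e k)) x - b k * inner ℝ (e k) x = 0 := by
      intro k
      have := h2 k
      rwa [hJf, inner_sub_left, real_inner_smul_left, real_inner_smul_left] at this
    refine key x (fun k => ?_) (fun k => ?_)
    · linear_combination a k * h1' k - b k * h2' k - inner ℝ (e k) x * hab k
    · linear_combination b k * h1' k + a k * h2' k - inner ℝ (Jmap H (e k)) x * hab k
  have hfL : ∀ k, f k ∈ L₀ := fun k => by
    rw [hL₀]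
    exact Submodule.le_topologicalClosure _ (Submodule.subset_span ⟨k, rfl⟩)
  have hfJf : ∀ j k, inner ℝ (f j) (Jmap H (f k)) = 0 := by
    intro j k
    rw [hJf, hfk]
    simp only [inner_add_left, inner_sub_right, real_inner_smul_left, real_inner_smul_right,
      heJ, hJe, Jinner]
    by_cases h : j = k
    · subst h; ring
    · rw [hee j k h]; ring
  have hJfL : ∀ k, Jmap H (f k) ∈ L₀ᗮ := fun k => by
    rw [hL₀]; exact mem_perp_closure_span f _ fun j => hfJf j k
  have hJfx : ∀ k, ∀ x ∈ L₀, inner ℝ (Jmap H (f k)) x = 0 := fun k x hx => by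
    rw [real_inner_comm]
    exact (Submodule.mem_orthogonal _ _).1 (hJfL k) x hx
  have hL₀c : IsClosed (L₀ : Set (WithLp 2 (H × H))) := by
    rw [hL₀]; exact Submodule.isClosed_topologicalClosure _
  haveI : CompleteSpace L₀ := hL₀c.completeSpace_coe
  haveI : CompleteSpace L := hLC.completeSpace_coe
  have hker : ∀ x ∈ L₀, PL x = 0 → x = 0 := by
    intro x hx h0
    have hxL : x ∈ Lᗮ := by have := hPL_orth x; rwa [h0, sub_zero] at this
    have h1 : ∀ k, inner ℝ (e k) x = 0 := fun k =>
      (Submodule.mem_orthogonal _ _).1 hxL _ (he_mem k)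
    refine key x h1 fun k => ?_
    have := hJfx k x hx
    rw [hJf, inner_sub_left, real_inner_smul_left, real_inner_smul_left, h1, mul_zero,
      sub_zero] at this
    exact (mul_eq_zero.1 this).resolve_left (ha_pos k).ne'
  have hinj : Set.InjOn PL (L₀ : Set (WithLp 2 (H × H))) := by
    intro x hx y hy hxy
    exact sub_eq_zero.1 (hker _ (L₀.sub_mem hx hy) (by rw [map_sub, hxy, sub_self]))
  have hPf : ∀ k, PL (f k) = a k • e k := by
    intro k
    have h1 : PL (f k) - a k • e k ∈ L := L.sub_mem (hPL_mem _) (L.smul_mem _ (he_mem k))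
    have h2 : PL (f k) - a k • e k ∈ Lᗮ := by
      have : PL (f k) - a k • e k = b k • Jmap H (e k) - (f k - PL (f k)) := by
        rw [hfk]; abel
      rw [this]
      exact Lᗮ.sub_mem (Lᗮ.smul_mem _ (hJL _ (he_mem k))) (hPL_orth _)
    have h3 := (Submodule.mem_orthogonal _ _).1 h2 _ h1
    exact sub_eq_zero.1 (inner_self_eq_zero.1 h3)
  refine ⟨?_, hinj, ?_, ?_⟩
  · apply le_antisymm
    · rintro _ ⟨x, hx, rfl⟩
      have : Jmap H x ∈ (Submodule.span ℝ (Set.range f)).topologicalClosureᗮ := by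
        refine mem_perp_closure_span f _ fun k => ?_
        have h := Jskew (f k) x
        rw [hJfx k x hx] at h
        linarith
      rwa [hL₀]
    · intro y hy
      obtain ⟨p, hp, q, hq, hpq⟩ := L₀.exists_add_mem_mem_orthogonal (-Jmap H y)
      have hq0 : q = 0 := by
        refine key2 q (fun k => (Submodule.mem_orthogonal _ _).1 hq _ (hfL k)) fun k => ?_
        have h1 : inner ℝ (Jmap H (f k)) (-Jmap H y) = 0 := by
          rw [inner_neg_right, Jinner, (Submodule.mem_orthogonal _ _).1 hy _ (hfL k), neg_zero]
        rwa [hpq, inner_add_right, hJfx k p hp, zero_add] at h1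
      refine ⟨p, hp, ?_⟩
      rw [hq0, add_zero] at hpq
      rw [← hpq, map_neg, JJ, neg_neg]
  · apply subset_antisymm
    · refine closure_minimal ?_ hLC
      rintro _ ⟨x, -, rfl⟩
      exact hPL_mem x
    · have hsub : Submodule.span ℝ (Set.range e) ≤ L₀.map (PL : _ →ₗ[ℝ] WithLp 2 (H × H)) := by
        rw [Submodule.span_le]
        rintro _ ⟨k, rfl⟩
        refine ⟨(a k)⁻¹ • f k, L₀.smul_mem _ (hfL k), ?_⟩
        change PL ((a k)⁻¹ • f k) = e k
        rw [map_smul, hPf, smul_smul, inv_mul_cancel₀ (ha_pos k).ne', one_smul]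
      intro y hy
      have hy' : y ∈ (Submodule.span ℝ (Set.range e)).topologicalClosure := by
        rw [he_total]; exact hy
      exact closure_mono hsub hy'
  · intro hs
    let T : L₀ →L[ℝ] L := (PL.comp L₀.subtypeL).codRestrict L (fun x => hPL_mem _)
    have hT : Function.Surjective T := by
      rintro ⟨y, hy⟩
      obtain ⟨x, hx, rfl⟩ := hs hy
      exact ⟨⟨x, hx⟩, rfl⟩
    obtain ⟨C, hC, hCx⟩ := T.exists_preimage_norm_le hT
    obtain ⟨k, hk⟩ := (ha_lim.eventually (gt_mem_nhds (inv_pos.2 hC))).exists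
    obtain ⟨⟨x, hx⟩, hxe, hxn⟩ := hCx ⟨a k • e k, L.smul_mem _ (he_mem k)⟩
    have hxe' : PL x = a k • e k := congrArg Subtype.val hxe
    have hxf : x = f k := hinj hx (hfL k) (by rw [hxe', hPf])
    have hn : ‖x‖ ≤ C * ‖a k • e k‖ := hxn
    rw [norm_smul, he_on.1 k, mul_one, Real.norm_of_nonneg (ha_pos k).le] at hn
    have hlt : C * a k < 1 := by
      have := mul_lt_mul_of_pos_left hk hC
      rwa [mul_inv_cancel₀ hC.ne'] at this
    have hone : inner ℝ (f k) (f k) = (1 : ℝ) := by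
      have h1 : inner ℝ (e k) (e k) = (1 : ℝ) := by
        rw [real_inner_self_eq_norm_sq, he_on.1 k]; norm_num
      rw [hfk]
      simp only [inner_add_left, inner_add_right, real_inner_smul_left, real_inner_smul_right,
        heJ, hJe, Jinner, h1]
      linear_combination hab k
    rw [real_inner_self_eq_norm_sq, ← hxf] at hone
    nlinarith [norm_nonneg x]
end

section
/- Let H be a real Hilbert space, Q a complete metric space, and suppose H × H = H♯ ⊕ H♭ is a direct sum decomposition into closed subspaces. For each q ∈ Q let M(q) : H♯ → H♭ be a bounded linear operator and assume that L(q) := { z + M(q) z : z ∈ H♯ } is a Lagrange subspace of H × H for every q ∈ Q. Then the following are equivalent: (1) the map q ↦ L(q) is continuous with respect to the metric d(L₁, L₂) := ‖Π_{L₁} − Π_{L₂}‖ on the set of Lagrange subspaces, where Π_{L_i} is the orthogonal projection onto L_i and ‖·‖ is the operator norm on H × H; (2) the map q ↦ M(q) is continuous in the operator norm of bounded operators from H♯ to H♭. -/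
theorem aux_MP {E F : Type*} [NormedAddCommGroup E] [InnerProductSpace ℝ E] [CompleteSpace E]
    [NormedAddCommGroup F] [NormedSpace ℝ F] {Q : Type*} [TopologicalSpace Q]
    (A : E →L[ℝ] F) (T : Q → F →L[ℝ] E) (P : Q → E →L[ℝ] E)
    (hs : ∀ q, star (P q) = P q) (hn : ∀ q, ‖P q‖ ≤ 1)
    (h1 : ∀ q, T q ∘L A ∘L P q = P q) (h2 : ∀ q, P q ∘L T q = T q)
    (hT : Continuous T) : Continuous P := by
  have key : ∀ p q, ‖(1 - P p) * P q‖ ≤ 2 * (‖T q - T p‖ * ‖A‖) := by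
    intro p q
    have e : (1 - P p) * P q = (1 - P p) ∘L ((T q - T p) ∘L (A ∘L P q)) := by
      ext x
      have a1 : T q (A (P q x)) = P q x := DFunLike.congr_fun (h1 q) x
      have a2 : P p (T p (A (P q x))) = T p (A (P q x)) := DFunLike.congr_fun (h2 p) _
      simp [a1, a2]
    rw [e]
    have b1 : ‖(1 : E →L[ℝ] E) - P p‖ ≤ 2 := by
      refine (norm_sub_le _ _).trans ?_
      have : ‖(1 : E →L[ℝ] E)‖ ≤ 1 := ContinuousLinearMap.norm_id_le
      linarith [hn p]
    have b2 : ‖A ∘L P q‖ ≤ ‖A‖ :=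
      (ContinuousLinearMap.opNorm_comp_le _ _).trans
        (mul_le_of_le_one_right (norm_nonneg _) (hn q))
    refine (ContinuousLinearMap.opNorm_comp_le _ _).trans ?_
    refine mul_le_mul b1 ?_ (norm_nonneg _) (by norm_num)
    refine (ContinuousLinearMap.opNorm_comp_le _ _).trans ?_
    gcongr
  have bound : ∀ p q, ‖P q - P p‖ ≤ 4 * ‖A‖ * ‖T q - T p‖ := by
    intro p q
    have e : P q - P p = (1 - P p) * P q - star ((1 - P q) * P p) := by
      rw [star_mul, star_sub, hs, hs, star_one]; noncomm_ring
    rw [e]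
    refine (norm_sub_le _ _).trans ?_
    have hst : ‖star ((1 - P q) * P p)‖ = ‖(1 - P q) * P p‖ :=
      LinearIsometryEquiv.norm_map ContinuousLinearMap.adjoint _
    rw [hst]
    have k1 := key p q
    have k2 := key q p
    rw [norm_sub_rev (T p)] at k2
    linarith
  rw [continuous_iff_continuousAt]
  intro p
  rw [ContinuousAt, tendsto_iff_norm_sub_tendsto_zero]
  refine squeeze_zero (fun _ => norm_nonneg _) (bound p) ?_
  have := (tendsto_iff_norm_sub_tendsto_zero.1 (hT.tendsto p)).const_mul (4 * ‖A‖)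
  simpa using this

theorem aux_PM {E F G : Type*} [NormedAddCommGroup E] [NormedSpace ℝ E]
    [NormedAddCommGroup F] [NormedSpace ℝ F] [CompleteSpace F]
    [NormedAddCommGroup G] [NormedSpace ℝ G] {Q : Type*} [TopologicalSpace Q]
    (A : E →L[ℝ] F) (B : E →L[ℝ] G) (T : Q → F →L[ℝ] E) (P : Q → E →L[ℝ] E) (M : Q → F →L[ℝ] G)
    (hA : ∀ q z, A (T q z) = z) (hB : ∀ q z, B (T q z) = M q z)
    (h1 : ∀ q, T q ∘L A ∘L P q = P q) (h2 : ∀ q, P q ∘L T q = T q)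
    (hP : Continuous P) : Continuous M := by
  rw [continuous_iff_continuousAt]
  intro p
  let U : Q → F →L[ℝ] F := fun q => A ∘L P q ∘L T p
  have hU : Continuous U := by fun_prop
  have hUp : U p = 1 := by
    ext z
    have a2 : P p (T p z) = T p z := DFunLike.congr_fun (h2 p) z
    simp [U, a2, hA]
  have hMU : ∀ q, M q ∘L U q = B ∘L P q ∘L T p := by
    intro q
    ext z
    have a1 : T q (A (P q (T p z))) = P q (T p z) := DFunLike.congr_fun (h1 q) _
    simp [U, ← hB, a1]
  have hI : ContinuousAt (fun q => Ring.inverse (U q)) p := by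
    have h : ContinuousAt Ring.inverse (U p) := by
      rw [hUp]; exact NormedRing.inverse_continuousAt (1 : (F →L[ℝ] F)ˣ)
    exact ContinuousAt.comp (f := U) h hU.continuousAt
  have hc : ContinuousAt (fun q => (B ∘L P q ∘L T p) ∘L Ring.inverse (U q)) p :=
    ContinuousAt.clm_comp (by fun_prop) hI
  refine hc.congr ?_
  have hu : ∀ᶠ q in nhds p, IsUnit (U q) := by
    apply hU.continuousAt.eventually
    rw [hUp]
    exact (Units.isOpen (R := F →L[ℝ] F)).mem_nhds isUnit_one
  filter_upwards [hu] with q hq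
  have hm : U q ∘L Ring.inverse (U q) = 1 := Ring.mul_inverse_cancel _ hq
  rw [← hMU, ContinuousLinearMap.comp_assoc, hm]
  ext z; simp

/-- Let `Q` be a complete metric space, `H × H = Hs ⊕ Hb` a direct
sum decomposition into closed subspaces, and for each `q ∈ Q` let
`M q : Hs → Hb` be a bounded operator whose graph `L q = { z + M q z : z ∈ Hs }`
is a Lagrange subspace, with orthogonal projection `P q` onto `L q`.
Then `q ↦ P q` (equivalently, `q ↦ L q` in the metric `d`) is continuous in the
operator norm iff `q ↦ M q` is continuous in the operator norm. -/
theorem stmt7 {H : Type*} [NormedAddCommGroup H] [InnerProductSpace ℝ H] [CompleteSpace H]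
    {Q : Type*} [MetricSpace Q] [CompleteSpace Q]
    (Hs Hb : Submodule ℝ (WithLp 2 (H × H)))
    (hHsC : IsClosed (Hs : Set (WithLp 2 (H × H))))
    (hHbC : IsClosed (Hb : Set (WithLp 2 (H × H))))
    (hdisj : Hs ⊓ Hb = ⊥) (hspan : Hs ⊔ Hb = ⊤)
    (M : Q → (Hs →L[ℝ] Hb))
    (Lq : Q → Submodule ℝ (WithLp 2 (H × H)))
    (hLq : ∀ q, Lq q = LinearMap.range (Hs.subtypeL + Hb.subtypeL.comp (M q)).toLinearMap)
    (hLagrange : ∀ q, IsLagrange (Lq q))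
    (P : Q → (WithLp 2 (H × H) →L[ℝ] WithLp 2 (H × H)))
    (hP_mem : ∀ q x, P q x ∈ Lq q) (hP_orth : ∀ q x, x - P q x ∈ (Lq q)ᗮ) :
    Continuous P ↔ Continuous M := by
  have hc : IsCompl Hs Hb := ⟨disjoint_iff.2 hdisj, codisjoint_iff.2 hspan⟩
  have ht : Submodule.IsTopCompl Hs Hb := Submodule.IsCompl.isTopCompl_of_isClosed hc hHsC hHbC
  have : CompleteSpace Hs := hHsC.completeSpace_coe
  let A := Hs.projectionOntoL Hb ht
  let B := Hb.projectionOntoL Hs ht.symm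
  let T : Q → Hs →L[ℝ] WithLp 2 (H × H) := fun q => Hs.subtypeL + Hb.subtypeL.comp (M q)
  have hA : ∀ q z, A (T q z) = z := by
    intro q z
    simp [A, T]
  have hB : ∀ q z, B (T q z) = M q z := by
    intro q z
    simp [B, T]
  have hmem : ∀ q x, x ∈ Lq q ↔ ∃ z, T q z = x := by
    intro q x
    rw [hLq]; rfl
  have hortho : ∀ q, (Lq q).HasOrthogonalProjection := fun q =>
    ⟨fun v => ⟨P q v, hP_mem q v, hP_orth q v⟩⟩
  have hPs : ∀ q, P q = (Lq q).starProjection := by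
    intro q
    ext1 x
    exact (Submodule.eq_starProjection_of_mem_orthogonal (hP_mem q x) (hP_orth q x)).symm
  have h1 : ∀ q, T q ∘L A ∘L P q = P q := by
    intro q
    ext1 x
    obtain ⟨z, hz⟩ := (hmem q _).1 (hP_mem q x)
    change T q (A (P q x)) = P q x
    rw [← hz, hA]
  have h2 : ∀ q, P q ∘L T q = T q := by
    intro q
    ext1 z
    change P q (T q z) = T q z
    rw [hPs]
    exact Submodule.starProjection_eq_self_iff.2 ((hmem q _).2 ⟨z, rfl⟩)
  constructor
  · exact aux_PM A B T P M hA hB h1 h2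
  · intro hM
    refine aux_MP A T P (fun q => ?_) (fun q => ?_) h1 h2 ?_
    · rw [hPs]; exact isSelfAdjoint_starProjection (Lq q)
    · rw [hPs]; exact Submodule.starProjection_norm_le _
    · exact continuous_const.add (continuous_const.clm_comp hM)
end

section
/- In the exponential dichotomy setting, suppose z : ℝ → H satisfies, for all s ∈ ℝ and all t ≥ 0, the homogeneous invariance relations Π♯ z(s) = G♯(t) Π♯ z(s − t) and Π♭ z(s) = G♭(t) Π♭ z(s + t). If z is bounded and continuous on ℝ, or if z is (measurable and) an element of L²(ℝ; H) and the relations hold for almost every s, then z = 0 (identically in the continuous case, almost everywhere in the L² case). -/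
open MeasureTheory

theorem aux_bdd {x K : ℝ} {ε : ℝ} (hε : 0 < ε)
    (h : ∀ t : ℝ, 0 ≤ t → x ≤ K * Real.exp (-ε * t)) : x ≤ 0 := by
  have h1 : Filter.Tendsto (fun t : ℝ => K * Real.exp (-ε * t)) Filter.atTop (nhds (K * 0)) := by
    refine Filter.Tendsto.const_mul K (Real.tendsto_exp_atBot.comp ?_)
    exact Filter.tendsto_id.const_mul_atTop_of_neg (by linarith)
  rw [mul_zero] at h1
  refine ge_of_tendsto h1 ?_
  filter_upwards [Filter.eventually_ge_atTop 0] with t ht using h t ht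

theorem aux_L2 {H : Type*} [NormedAddCommGroup H] {z : ℝ → H}
    (hz : MemLp z 2 (volume : Measure ℝ)) {x K : ℝ} (hK : 0 ≤ K) (S : Set ℝ)
    (hS : volume S = ⊤) (h : ∀ r ∈ S, x ≤ K * ‖z r‖) : x ≤ 0 := by
  by_contra hx
  push Not at hx
  have hc : 0 < x / (K + 1) := by positivity
  have h1 := hz.meas_ge_lt_top (by norm_num) (by norm_num) (ε := ⟨x / (K + 1), hc.le⟩)
    (fun h0 => hc.ne' (congrArg Subtype.val h0))
  have h2 : S ⊆ {r | (⟨x / (K + 1), hc.le⟩ : NNReal) ≤ ‖z r‖₊} := by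
    intro r hr
    change x / (K + 1) ≤ ‖z r‖
    rw [div_le_iff₀ (by linarith)]
    have := h r hr
    nlinarith [norm_nonneg (z r)]
  have h3 := measure_mono (μ := volume) h2
  rw [hS] at h3
  exact absurd (lt_of_le_of_lt h3 h1) (lt_irrefl _)

theorem aux_step {H : Type*} [NormedAddCommGroup H] [InnerProductSpace ℝ H]
    {P G : H →L[ℝ] H} {M e : ℝ} {y w : H} (hM : 0 < M) (he : 0 ≤ e)
    (h : ‖G (P w)‖ ≤ M * e * ‖P w‖) (hy : y = G (P w)) :
    ‖y‖ ≤ M * ‖P‖ * ‖w‖ * e := by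
  rw [hy]
  calc _ ≤ M * e * ‖P w‖ := h
    _ ≤ M * e * (‖P‖ * ‖w‖) := by gcongr; exact P.le_opNorm w
    _ = _ := by ring

/-- exponential dichotomy setting.  `H = Hs ⊕ Hb` with complementary
bounded projectors `Ps`, `Pb`; `Gs`, `Gb` are strongly continuous semigroups on `Hs`
resp. `Hb` (encoded as operator families on `H` whose relevant properties are imposed
on `Hs` resp. `Hb`) satisfying `‖G(t)x‖ ≤ M e^{-ε t} ‖x‖` for `t ≥ 0`.
If `z : ℝ → H` satisfies the homogeneous invariance relations
`Ps z(s) = Gs(t) Ps z(s - t)` and `Pb z(s) = Gb(t) Pb z(s + t)` for all `t ≥ 0`, then: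
if `z` is bounded and continuous it vanishes identically; if `z ∈ L²(ℝ; H)` and the
relations hold a.e. in `s`, then `z = 0` almost everywhere. -/
theorem stmt8 {H : Type*} [NormedAddCommGroup H] [InnerProductSpace ℝ H] [CompleteSpace H]
    (Hs Hb : Submodule ℝ H) (hHsC : IsClosed (Hs : Set H)) (hHbC : IsClosed (Hb : Set H))
    (hdisj : Hs ⊓ Hb = ⊥) (hspan : Hs ⊔ Hb = ⊤)
    (Ps Pb : H →L[ℝ] H)
    (hPs_mem : ∀ x, Ps x ∈ Hs) (hPb_mem : ∀ x, Pb x ∈ Hb)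
    (hsum : ∀ x, Ps x + Pb x = x)
    (hPs_id : ∀ x ∈ Hs, Ps x = x) (hPb_id : ∀ x ∈ Hb, Pb x = x)
    (Gs Gb : ℝ → H →L[ℝ] H)
    (hGs0 : ∀ x ∈ Hs, Gs 0 x = x) (hGb0 : ∀ x ∈ Hb, Gb 0 x = x)
    (hGs_mem : ∀ t, 0 ≤ t → ∀ x ∈ Hs, Gs t x ∈ Hs)
    (hGb_mem : ∀ t, 0 ≤ t → ∀ x ∈ Hb, Gb t x ∈ Hb)
    (hGs_sg : ∀ t, 0 ≤ t → ∀ s, 0 ≤ s → ∀ x ∈ Hs, Gs (t + s) x = Gs t (Gs s x))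
    (hGb_sg : ∀ t, 0 ≤ t → ∀ s, 0 ≤ s → ∀ x ∈ Hb, Gb (t + s) x = Gb t (Gb s x))
    (hGs_cont : ∀ x ∈ Hs, ContinuousOn (fun t => Gs t x) (Set.Ici (0 : ℝ)))
    (hGb_cont : ∀ x ∈ Hb, ContinuousOn (fun t => Gb t x) (Set.Ici (0 : ℝ)))
    (M ε : ℝ) (hM : 0 < M) (hε : 0 < ε)
    (hGs_decay : ∀ t, 0 ≤ t → ∀ x ∈ Hs, ‖Gs t x‖ ≤ M * Real.exp (-ε * t) * ‖x‖)
    (hGb_decay : ∀ t, 0 ≤ t → ∀ x ∈ Hb, ‖Gb t x‖ ≤ M * Real.exp (-ε * t) * ‖x‖) :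
    (∀ z : ℝ → H, Continuous z → (∃ C, ∀ s, ‖z s‖ ≤ C) →
      (∀ s : ℝ, ∀ t : ℝ, 0 ≤ t →
        Ps (z s) = Gs t (Ps (z (s - t))) ∧ Pb (z s) = Gb t (Pb (z (s + t)))) →
      ∀ s, z s = 0) ∧
    (∀ z : ℝ → H, MemLp z 2 (volume : Measure ℝ) →
      (∀ᵐ s ∂(volume : Measure ℝ), ∀ t : ℝ, 0 ≤ t →
        Ps (z s) = Gs t (Ps (z (s - t))) ∧ Pb (z s) = Gb t (Pb (z (s + t)))) →
      ∀ᵐ s ∂(volume : Measure ℝ), z s = 0) := by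
  constructor
  · rintro z - ⟨C, hC⟩ h s
    have h1 : ‖Ps (z s)‖ ≤ 0 := by
      refine aux_bdd (K := M * ‖Ps‖ * C) hε fun t ht => ?_
      refine (aux_step hM (Real.exp_nonneg _) (hGs_decay t ht _ (hPs_mem _))
        (h s t ht).1).trans ?_
      gcongr
      exact hC _
    have h2 : ‖Pb (z s)‖ ≤ 0 := by
      refine aux_bdd (K := M * ‖Pb‖ * C) hε fun t ht => ?_
      refine (aux_step hM (Real.exp_nonneg _) (hGb_decay t ht _ (hPb_mem _))
        (h s t ht).2).trans ?_
      gcongr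
      exact hC _
    rw [← hsum (z s), norm_le_zero_iff.1 h1, norm_le_zero_iff.1 h2, add_zero]
  · intro z hz h
    filter_upwards [h] with s hs
    have hexp : ∀ t : ℝ, 0 ≤ t → Real.exp (-ε * t) ≤ 1 := fun t ht =>
      Real.exp_le_one_iff.2 (by nlinarith)
    have h1 : ‖Ps (z s)‖ ≤ 0 := by
      refine aux_L2 hz (K := M * ‖Ps‖) (by positivity) (Set.Iic s) Real.volume_Iic
        fun r hr => ?_
      have ht : 0 ≤ s - r := sub_nonneg.2 hr
      have := aux_step hM (Real.exp_nonneg _) (hGs_decay _ ht _ (hPs_mem _)) (hs _ ht).1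
      rw [sub_sub_cancel] at this
      exact this.trans (mul_le_of_le_one_right (by positivity) (hexp _ ht))
    have h2 : ‖Pb (z s)‖ ≤ 0 := by
      refine aux_L2 hz (K := M * ‖Pb‖) (by positivity) (Set.Ici s) Real.volume_Ici
        fun r hr => ?_
      have ht : 0 ≤ r - s := sub_nonneg.2 hr
      have := aux_step hM (Real.exp_nonneg _) (hGb_decay _ ht _ (hPb_mem _)) (hs _ ht).2
      rw [add_sub_cancel] at this
      exact this.trans (mul_le_of_le_one_right (by positivity) (hexp _ ht))
    rw [← hsum (z s), norm_le_zero_iff.1 h1, norm_le_zero_iff.1 h2, add_zero]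
end

section
/- In the exponential dichotomy setting, define the kernel F(t, s) ∈ L(H) by F(t, s) := G♯(t − s) Π♯ for t > s and F(t, s) := −G♭(s − t) Π♭ for t < s. Then for every f ∈ L²(ℝ; H) the integral z(t) := ∫_ℝ F(t, s) f(s) ds converges absolutely for every t ∈ ℝ, the function z is bounded and continuous on ℝ, z ∈ L²(ℝ; H), z is a mild dichotomous solution of the inhomogeneous equation with inhomogeneity f, and the estimates ‖Π♯ z‖_{L²(ℝ;H)} ≤ (M/ε) ‖Π♯ f‖_{L²(ℝ;H)} and ‖Π♭ z‖_{L²(ℝ;H)} ≤ (M/ε) ‖Π♭ f‖_{L²(ℝ;H)} hold. -/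
open MeasureTheory
set_option maxHeartbeats 400000

lemma dich_young (k φ : ℝ → ENNReal) (hk : Measurable k) (hφ : AEMeasurable φ volume) :
    ∫⁻ t, (∫⁻ s, k (t - s) * φ s) ^ (2:ℝ) ≤ (∫⁻ r, k r) ^ (2:ℝ) * ∫⁻ s, φ s ^ (2:ℝ) := by
  have h1 : ∀ t, (∫⁻ s, k (t - s) * φ s) ^ (2:ℝ) ≤
      (∫⁻ r, k r) * ∫⁻ s, k (t - s) * φ s ^ (2:ℝ) := by
    intro t
    have hkt : Measurable fun s => k (t - s) := hk.comp (measurable_const.sub measurable_id)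
    have hcs := ENNReal.lintegral_mul_le_Lp_mul_Lq volume (p := 2) (q := 2)
      ⟨by norm_num, by norm_num, by norm_num⟩
      (f := fun s => k (t - s) ^ (1/2:ℝ)) (g := fun s => k (t - s) ^ (1/2:ℝ) * φ s)
      (hkt.pow_const _).aemeasurable ((hkt.pow_const _).aemeasurable.mul hφ)
    have hsq : ∀ x : ENNReal, x ^ (1/2:ℝ) * x ^ (1/2:ℝ) = x := by
      intro x
      rw [← ENNReal.rpow_add_of_nonneg _ _ (by norm_num) (by norm_num)]; norm_num
    have hsq2 : ∀ x : ENNReal, (x ^ (1/2:ℝ)) ^ (2:ℝ) = x := by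
      intro x
      rw [← ENNReal.rpow_mul]; norm_num
    have e1 : ∀ s, ((fun s => k (t - s) ^ (1/2:ℝ)) * (fun s => k (t - s) ^ (1/2:ℝ) * φ s)) s
        = k (t - s) * φ s := by
      intro s
      simp only [Pi.mul_apply]
      rw [← mul_assoc, hsq]
    have e2 : ∀ s, (k (t - s) ^ (1/2:ℝ) * φ s) ^ (2:ℝ) = k (t - s) * φ s ^ (2:ℝ) := by
      intro s
      rw [ENNReal.mul_rpow_of_nonneg _ _ (by norm_num), hsq2]
    simp only [e1, e2, hsq2] at hcs
    rw [lintegral_sub_left_eq_self] at hcs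
    calc _ ≤ _ := ENNReal.rpow_le_rpow hcs (by norm_num : (0:ℝ) ≤ 2)
      _ = _ := by rw [ENNReal.mul_rpow_of_nonneg _ _ (by norm_num), hsq2, hsq2]
  have hm : AEMeasurable (Function.uncurry fun t s : ℝ => k (t - s) * φ s ^ (2:ℝ))
      (volume.prod volume) := by
    apply AEMeasurable.mul
    · exact (hk.comp (measurable_fst.sub measurable_snd)).aemeasurable
    · exact (hφ.pow_const _).comp_quasiMeasurePreserving Measure.quasiMeasurePreserving_snd
  have hm2 : AEMeasurable (fun t : ℝ => ∫⁻ s, k (t - s) * φ s ^ (2:ℝ)) volume :=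
    hm.lintegral_prod_right'
  calc _ ≤ ∫⁻ t, (∫⁻ r, k r) * ∫⁻ s, k (t - s) * φ s ^ (2:ℝ) := lintegral_mono h1
    _ = (∫⁻ r, k r) * ∫⁻ t, ∫⁻ s, k (t - s) * φ s ^ (2:ℝ) := lintegral_const_mul'' _ hm2
    _ = (∫⁻ r, k r) * ∫⁻ s, ∫⁻ t, k (t - s) * φ s ^ (2:ℝ) := by rw [lintegral_lintegral_swap hm]
    _ = (∫⁻ r, k r) * ∫⁻ s, (∫⁻ r, k r) * φ s ^ (2:ℝ) := by
        congr 1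
        apply lintegral_congr
        intro s
        rw [lintegral_mul_const _ (show Measurable fun t => k (t - s) from
            hk.comp (measurable_id.sub measurable_const)),
          lintegral_sub_right_eq_self]
    _ = _ := by
        rw [lintegral_const_mul'' _ (hφ.pow_const _), ← mul_assoc]
        congr 1
        rw [ENNReal.rpow_two, sq]

lemma dich_exp_int {c : ℝ} (hc : 0 < c) : Integrable (fun x : ℝ => Real.exp (-c * |x|)) := by
  rw [← integrableOn_univ, ← Set.Iic_union_Ioi (a := (0:ℝ))]
  apply IntegrableOn.union
  · refine (integrableOn_exp_mul_Iic hc 0).congr_fun ?_ measurableSet_Iic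
    intro x hx
    simp only [abs_of_nonpos (Set.mem_Iic.1 hx)]
    congr 1; ring
  · refine (integrableOn_exp_mul_Ioi (neg_lt_zero.2 hc) 0).congr_fun ?_ measurableSet_Ioi
    intro x hx
    simp only [abs_of_pos (Set.mem_Ioi.1 hx)]

lemma dich_kint {ε : ℝ} (hε : 0 < ε) :
    ∫⁻ r, (Set.Ioi (0:ℝ)).indicator (fun r => ENNReal.ofReal (Real.exp (-ε * r))) r
      = ENNReal.ofReal (1 / ε) := by
  rw [lintegral_indicator measurableSet_Ioi, ← ofReal_integral_eq_lintegral_ofReal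
    (integrableOn_exp_mul_Ioi (neg_lt_zero.2 hε) 0) (Filter.Eventually.of_forall fun x => (Real.exp_pos _).le),
    integral_exp_mul_Ioi (neg_lt_zero.2 hε)]
  congr 1
  simp

lemma dich_kernel_cont {H : Type*} [NormedAddCommGroup H] [InnerProductSpace ℝ H] [CompleteSpace H]
    (S : Submodule ℝ H) (P : H →L[ℝ] H) (hP : ∀ x, P x ∈ S)
    (G : ℝ → H →L[ℝ] H)
    (hc : ∀ x ∈ S, ContinuousOn (fun t => G t x) (Set.Ici (0 : ℝ)))
    (M ε : ℝ) (hM : 0 < M) (hε : 0 < ε)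
    (hd : ∀ t, 0 ≤ t → ∀ x ∈ S, ‖G t x‖ ≤ M * Real.exp (-ε * t) * ‖x‖) :
    Continuous (fun p : ℝ × H => G (max p.1 0) (P p.2)) := by
  apply continuous_prod_of_continuous_lipschitzWith' _ (M.toNNReal * ‖P‖₊)
  · intro a
    apply LipschitzWith.of_dist_le_mul
    intro x y
    rw [dist_eq_norm, dist_eq_norm, ← map_sub, ← map_sub]
    have h1 := hd (max a 0) (le_max_right _ _) (P (x - y)) (hP _)
    have h2 : Real.exp (-ε * max a 0) ≤ 1 := by
      rw [Real.exp_le_one_iff]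
      have := le_max_right a 0
      nlinarith
    have h3 := P.le_opNorm (x - y)
    push_cast
    rw [Real.coe_toNNReal _ hM.le, mul_assoc]
    calc _ ≤ _ := h1
      _ ≤ M * 1 * ‖P (x - y)‖ := by gcongr
      _ ≤ M * (‖P‖ * ‖x - y‖) := by rw [mul_one]; gcongr
  · intro b
    exact (hc (P b) (hP b)).comp_continuous (continuous_id.max continuous_const)
      (fun x => le_max_right x 0)

lemma dich_one {H : Type*} [NormedAddCommGroup H] [InnerProductSpace ℝ H] [CompleteSpace H]
    (S : Submodule ℝ H) (P : H →L[ℝ] H) (hP : ∀ x, P x ∈ S)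
    (hPid : ∀ x ∈ S, P x = x)
    (G : ℝ → H →L[ℝ] H)
    (hmem : ∀ t, 0 ≤ t → ∀ x ∈ S, G t x ∈ S)
    (hsg : ∀ t, 0 ≤ t → ∀ s, 0 ≤ s → ∀ x ∈ S, G (t + s) x = G t (G s x))
    (hc : ∀ x ∈ S, ContinuousOn (fun t => G t x) (Set.Ici (0 : ℝ)))
    (M ε : ℝ) (hM : 0 < M) (hε : 0 < ε)
    (hd : ∀ t, 0 ≤ t → ∀ x ∈ S, ‖G t x‖ ≤ M * Real.exp (-ε * t) * ‖x‖)
    (f : ℝ → H) (hf : MemLp f 2 (volume : Measure ℝ)) :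
    (∀ t : ℝ, IntegrableOn (fun s => G (t - s) (P (f s))) (Set.Iic t)) ∧
    ∀ u : ℝ → H, (∀ t, u t = ∫ s in Set.Iic t, G (t - s) (P (f s))) →
      Continuous u ∧ (∃ C, ∀ t, ‖u t‖ ≤ C) ∧ MemLp u 2 volume ∧
      (∀ t, P (u t) = u t) ∧
      (∀ s t : ℝ, 0 ≤ t → u s = G t (u (s - t)) + ∫ θ in (s - t)..s, G (s - θ) (P (f θ))) ∧
      eLpNorm u 2 volume ≤ ENNReal.ofReal (M / ε) * eLpNorm (fun t => P (f t)) 2 volume := by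
  have hK := dich_kernel_cont S P hP G hc M ε hM hε hd
  have hPf : MemLp (fun t => P (f t)) 2 (volume : Measure ℝ) := P.comp_memLp' hf
  have hPf2 : Integrable (fun s => ‖P (f s)‖ ^ 2) :=
    MemLp.integrable_norm_pow (p := 2) (by exact_mod_cast hPf) (by norm_num)
  -- the extended integrand
  set F : ℝ → ℝ → H := fun t => (Set.Iic t).indicator (fun s => G (t - s) (P (f s))) with hF
  have hFmeas : ∀ t, AEStronglyMeasurable (F t) volume := by
    intro t
    have h1 : AEStronglyMeasurable (fun s => G (max (t - s) 0) (P (f s))) volume :=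
      hK.comp_aestronglyMeasurable
        (((continuous_const.sub continuous_id).aestronglyMeasurable
          (μ := volume) (f := fun s : ℝ => t - s)).prodMk hf.1)
    refine (h1.indicator (measurableSet_Iic (a := t))).congr (Filter.Eventually.of_forall ?_)
    intro s
    by_cases hs : s ≤ t
    · simp [hF, Set.indicator, hs]
    · simp [hF, Set.indicator, hs]
  have hFb0 : ∀ t s, s ≤ t → ‖F t s‖ ≤ M * Real.exp (-ε * (t - s)) * ‖P (f s)‖ := by
    intro t s hs
    simp only [hF, Set.indicator, Set.mem_Iic, hs, if_true]
    exact hd _ (by linarith) _ (hP _)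
  have hFb : ∀ t s, ‖F t s‖ ≤ M * (Real.exp (-ε * |t - s|) * ‖P (f s)‖) := by
    intro t s
    by_cases hs : s ≤ t
    · rw [abs_of_nonneg (by linarith), ← mul_assoc]
      exact hFb0 t s hs
    · simp only [hF, Set.indicator, Set.mem_Iic, hs, if_false, norm_zero]
      positivity
  -- bound
  have hB : ∀ t s, M * (Real.exp (-ε * |t - s|) * ‖P (f s)‖) ≤
      M * (Real.exp (-(2 * ε) * |t - s|) + ‖P (f s)‖ ^ 2) := by
    intro t s
    have e : Real.exp (-(2 * ε) * |t - s|) = Real.exp (-ε * |t - s|) ^ 2 := by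
      rw [← Real.exp_nat_mul]; congr 1; push_cast; ring
    rw [e]
    gcongr
    nlinarith [sq_nonneg (Real.exp (-ε * |t - s|) - ‖P (f s)‖),
      sq_nonneg (Real.exp (-ε * |t - s|)), sq_nonneg (‖P (f s)‖)]
  have hexp : Integrable (fun x : ℝ => Real.exp (-(2 * ε) * |x|)) := dich_exp_int (by positivity)
  have hBint : ∀ t, Integrable (fun s => M * (Real.exp (-(2 * ε) * |t - s|) + ‖P (f s)‖ ^ 2)) :=
    fun t => ((hexp.comp_sub_left t).add hPf2).const_mul M
  have hFint : ∀ t, Integrable (F t) := fun t =>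
    (hBint t).mono' (hFmeas t) (Filter.Eventually.of_forall fun s => (hFb t s).trans (hB t s))
  have hon : ∀ t : ℝ, IntegrableOn (fun s => G (t - s) (P (f s))) (Set.Iic t) := fun t =>
    (integrable_indicator_iff measurableSet_Iic).1 (hFint t)
  refine ⟨hon, ?_⟩
  intro u hu
  have huF : ∀ t, u t = ∫ s, F t s := fun t => by
    rw [hu, hF, integral_indicator measurableSet_Iic]
  have hucont : Continuous u := by
    rw [continuous_iff_continuousAt]
    intro t0
    rw [funext huF]
    refine continuousAt_of_dominated
      (bound := fun s => Real.exp ε * (M * (Real.exp (-(2 * ε) * |t0 - s|) + ‖P (f s)‖ ^ 2)))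
      (Filter.Eventually.of_forall hFmeas) ?_ ((hBint t0).const_mul _) ?_
    · filter_upwards [Metric.ball_mem_nhds t0 one_pos] with t ht
      refine Filter.Eventually.of_forall fun s => ?_
      refine (hFb t s).trans (le_trans ?_ (mul_le_mul_of_nonneg_left (hB t0 s) (Real.exp_pos _).le))
      have h1 : Real.exp (-ε * |t - s|) ≤ Real.exp ε * Real.exp (-ε * |t0 - s|) := by
        rw [← Real.exp_add, Real.exp_le_exp]
        have h2 : |t0 - s| ≤ |t0 - t| + |t - s| := abs_sub_le _ _ _
        have h3 : |t0 - t| < 1 := by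
          rw [abs_sub_comm]; exact ht
        nlinarith
      calc _ ≤ M * ((Real.exp ε * Real.exp (-ε * |t0 - s|)) * ‖P (f s)‖) := by gcongr
        _ = _ := by ring
    · have hne : ∀ᵐ s : ℝ, s ≠ t0 := by
        simp [ae_iff]
      filter_upwards [hne] with s hs
      rcases lt_or_gt_of_ne hs with h | h
      · have : ContinuousAt (fun t => G (max (t - s) 0) (P (f s))) t0 :=
          (hK.comp (Continuous.prodMk (continuous_id.sub continuous_const)
            (continuous_const (y := f s)))).continuousAt
        refine this.congr ?_
        filter_upwards [lt_mem_nhds h] with t ht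
        simp [hF, Set.indicator, ht.le]
      · refine (continuousAt_const (y := (0:H))).congr ?_
        filter_upwards [gt_mem_nhds h] with t ht
        simp [hF, Set.indicator, ht]
  have hubd : ∃ C, ∀ t, ‖u t‖ ≤ C := by
    refine ⟨M * ((∫ x : ℝ, Real.exp (-(2 * ε) * |x|)) + ∫ s, ‖P (f s)‖ ^ 2), fun t => ?_⟩
    rw [huF]
    refine (norm_integral_le_of_norm_le (hBint t) (Filter.Eventually.of_forall
      fun s => (hFb t s).trans (hB t s))).trans_eq ?_
    rw [integral_const_mul, integral_add (hexp.comp_sub_left t) hPf2,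
      integral_sub_left_eq_self (fun x : ℝ => Real.exp (-(2 * ε) * |x|))]
  have hL2 : eLpNorm u 2 volume ≤
      ENNReal.ofReal (M / ε) * eLpNorm (fun t => P (f t)) 2 volume := by
    set k : ℝ → ENNReal :=
      (Set.Ioi (0:ℝ)).indicator (fun r => ENNReal.ofReal (Real.exp (-ε * r))) with hk
    have hkm : Measurable k := by
      refine Measurable.indicator ?_ measurableSet_Ioi
      fun_prop
    have hb : ∀ t, ‖u t‖ₑ ≤ ENNReal.ofReal M * ∫⁻ s, k (t - s) * ‖P (f s)‖ₑ := by
      intro t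
      rw [huF]
      refine (enorm_integral_le_lintegral_enorm _).trans ?_
      rw [← lintegral_const_mul' _ _ ENNReal.ofReal_ne_top]
      apply lintegral_mono_ae
      have hne : ∀ᵐ s : ℝ, s ≠ t := by
        simp [ae_iff]
      filter_upwards [hne] with s hs
      rcases lt_or_gt_of_ne hs with h | h
      · have h1 := hFb0 t s h.le
        have h2 : k (t - s) = ENNReal.ofReal (Real.exp (-ε * (t - s))) := by
          simp [hk, Set.indicator, h]
        rw [h2, ← ofReal_norm, ← ofReal_norm, ← mul_assoc,
          ← ENNReal.ofReal_mul hM.le, ← ENNReal.ofReal_mul (by positivity)]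
        exact ENNReal.ofReal_le_ofReal h1
      · simp [hF, Set.indicator, h]
    have hy := dich_young k (fun s => ‖P (f s)‖ₑ) hkm hPf.1.enorm
    rw [hk, dich_kint hε, ← hk] at hy
    rw [eLpNorm_eq_lintegral_rpow_enorm_toReal (by norm_num) (by norm_num),
      eLpNorm_eq_lintegral_rpow_enorm_toReal (by norm_num) (by norm_num)]
    simp only [ENNReal.toReal_ofNat]
    have h3 : ∫⁻ t, ‖u t‖ₑ ^ (2:ℝ) ≤
        ENNReal.ofReal (M / ε) ^ (2:ℝ) * ∫⁻ s, ‖P (f s)‖ₑ ^ (2:ℝ) := by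
      calc _ ≤ ∫⁻ t, (ENNReal.ofReal M * ∫⁻ s, k (t - s) * ‖P (f s)‖ₑ) ^ (2:ℝ) :=
            lintegral_mono fun t => ENNReal.rpow_le_rpow (hb t) (by norm_num)
        _ = ENNReal.ofReal M ^ (2:ℝ) * ∫⁻ t, (∫⁻ s, k (t - s) * ‖P (f s)‖ₑ) ^ (2:ℝ) := by
            rw [← lintegral_const_mul' _ _ (by simp)]
            apply lintegral_congr
            intro t
            rw [ENNReal.mul_rpow_of_nonneg _ _ (by norm_num)]
        _ ≤ _ := mul_le_mul_right hy _
        _ = _ := by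
            rw [← mul_assoc, ← ENNReal.mul_rpow_of_nonneg _ _ (by norm_num),
              ← ENNReal.ofReal_mul hM.le]
            congr 4
            ring
    refine (ENNReal.rpow_le_rpow h3 (by norm_num : (0:ℝ) ≤ 1/2)).trans_eq ?_
    rw [ENNReal.mul_rpow_of_nonneg _ _ (by norm_num), ← ENNReal.rpow_mul]
    norm_num
  refine ⟨hucont, hubd, ⟨hucont.aestronglyMeasurable, hL2.trans_lt
    (ENNReal.mul_lt_top ENNReal.ofReal_lt_top hPf.2)⟩, ?_, ?_, hL2⟩
  · intro t
    rw [hu, ← ContinuousLinearMap.integral_comp_comm _ (hon t)]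
    apply setIntegral_congr_fun measurableSet_Iic
    intro s hs
    exact hPid _ (hmem _ (sub_nonneg.2 hs) _ (hP _))
  · intro s t ht
    have heq : Set.EqOn (fun θ => G t (G (s - t - θ) (P (f θ)))) (fun θ => G (s - θ) (P (f θ)))
        (Set.Iic (s - t)) := by
      intro θ hθ
      have := hsg t ht (s - t - θ) (sub_nonneg.2 hθ) _ (hP (f θ))
      simp only
      rw [← this]
      congr 2
      ring
    have h1 : G t (u (s - t)) = ∫ θ in Set.Iic (s - t), G (s - θ) (P (f θ)) := by
      rw [hu, ← ContinuousLinearMap.integral_comp_comm _ (hon _)]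
      exact setIntegral_congr_fun measurableSet_Iic heq
    rw [h1, hu, ← intervalIntegral.integral_Iic_sub_Iic
      ((hon s).mono_set (Set.Iic_subset_Iic.2 (by linarith))) (hon s)]
    abel

/-- exponential dichotomy setting.  With the Green kernel
`F(t, s) = Gs(t-s) Ps` for `t > s` and `F(t, s) = -Gb(s-t) Pb` for `t < s`,
for every `f ∈ L²(ℝ; H)` the integral `z(t) = ∫ F(t, s) f(s) ds` converges absolutely
for every `t`, the resulting function `z` is bounded and continuous, belongs to
`L²(ℝ; H)`, is a mild dichotomous solution of the inhomogeneous equation with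
inhomogeneity `f`, and satisfies `‖Ps z‖_{L²} ≤ (M/ε) ‖Ps f‖_{L²}` and
`‖Pb z‖_{L²} ≤ (M/ε) ‖Pb f‖_{L²}`. -/
theorem stmt9 {H : Type*} [NormedAddCommGroup H] [InnerProductSpace ℝ H] [CompleteSpace H]
    (Hs Hb : Submodule ℝ H) (hHsC : IsClosed (Hs : Set H)) (hHbC : IsClosed (Hb : Set H))
    (hdisj : Hs ⊓ Hb = ⊥) (hspan : Hs ⊔ Hb = ⊤)
    (Ps Pb : H →L[ℝ] H)
    (hPs_mem : ∀ x, Ps x ∈ Hs) (hPb_mem : ∀ x, Pb x ∈ Hb)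
    (hsum : ∀ x, Ps x + Pb x = x)
    (hPs_id : ∀ x ∈ Hs, Ps x = x) (hPb_id : ∀ x ∈ Hb, Pb x = x)
    (Gs Gb : ℝ → H →L[ℝ] H)
    (hGs0 : ∀ x ∈ Hs, Gs 0 x = x) (hGb0 : ∀ x ∈ Hb, Gb 0 x = x)
    (hGs_mem : ∀ t, 0 ≤ t → ∀ x ∈ Hs, Gs t x ∈ Hs)
    (hGb_mem : ∀ t, 0 ≤ t → ∀ x ∈ Hb, Gb t x ∈ Hb)
    (hGs_sg : ∀ t, 0 ≤ t → ∀ s, 0 ≤ s → ∀ x ∈ Hs, Gs (t + s) x = Gs t (Gs s x))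
    (hGb_sg : ∀ t, 0 ≤ t → ∀ s, 0 ≤ s → ∀ x ∈ Hb, Gb (t + s) x = Gb t (Gb s x))
    (hGs_cont : ∀ x ∈ Hs, ContinuousOn (fun t => Gs t x) (Set.Ici (0 : ℝ)))
    (hGb_cont : ∀ x ∈ Hb, ContinuousOn (fun t => Gb t x) (Set.Ici (0 : ℝ)))
    (M ε : ℝ) (hM : 0 < M) (hε : 0 < ε)
    (hGs_decay : ∀ t, 0 ≤ t → ∀ x ∈ Hs, ‖Gs t x‖ ≤ M * Real.exp (-ε * t) * ‖x‖)
    (hGb_decay : ∀ t, 0 ≤ t → ∀ x ∈ Hb, ‖Gb t x‖ ≤ M * Real.exp (-ε * t) * ‖x‖)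
    (f : ℝ → H) (hf : MemLp f 2 (volume : Measure ℝ)) :
    (∀ t : ℝ, Integrable
      (fun s => if s < t then Gs (t - s) (Ps (f s)) else -(Gb (s - t) (Pb (f s))))
      (volume : Measure ℝ)) ∧
    (∀ z : ℝ → H,
      (∀ t : ℝ, z t =
        ∫ s, (if s < t then Gs (t - s) (Ps (f s)) else -(Gb (s - t) (Pb (f s))))
          ∂(volume : Measure ℝ)) →
      Continuous z ∧ (∃ C, ∀ t, ‖z t‖ ≤ C) ∧ MemLp z 2 (volume : Measure ℝ) ∧
      (∀ s : ℝ, ∀ t : ℝ, 0 ≤ t →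
        Ps (z s) = Gs t (Ps (z (s - t))) + ∫ θ in (s - t)..s, Gs (s - θ) (Ps (f θ)) ∧
        Pb (z s) = Gb t (Pb (z (s + t))) - ∫ θ in s..(s + t), Gb (θ - s) (Pb (f θ))) ∧
      eLpNorm (fun t => Ps (z t)) 2 (volume : Measure ℝ) ≤
        ENNReal.ofReal (M / ε) * eLpNorm (fun t => Ps (f t)) 2 (volume : Measure ℝ) ∧
      eLpNorm (fun t => Pb (z t)) 2 (volume : Measure ℝ) ≤
        ENNReal.ofReal (M / ε) * eLpNorm (fun t => Pb (f t)) 2 (volume : Measure ℝ)) := by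
  obtain ⟨hus, hu⟩ := dich_one Hs Ps hPs_mem hPs_id Gs hGs_mem hGs_sg hGs_cont M ε hM hε
    hGs_decay f hf
  have hf' : MemLp (fun s => f (-s)) 2 (volume : Measure ℝ) :=
    hf.comp_measurePreserving (Measure.measurePreserving_neg volume)
  obtain ⟨hwb, hw⟩ := dich_one Hb Pb hPb_mem hPb_id Gb hGb_mem hGb_sg hGb_cont M ε hM hε
    hGb_decay (fun s => f (-s)) hf'
  have hPsb : ∀ x, Ps (Pb x) = 0 := by
    intro x
    have h := hsum (Pb x)
    rw [hPb_id _ (hPb_mem x)] at h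
    simpa using h
  have hPbs : ∀ x, Pb (Ps x) = 0 := by
    intro x
    have h := hsum (Ps x)
    rw [hPs_id _ (hPs_mem x)] at h
    simpa using h
  set u : ℝ → H := fun t => ∫ s in Set.Iic t, Gs (t - s) (Ps (f s)) with hud
  set w : ℝ → H := fun t => ∫ s in Set.Iic t, Gb (t - s) (Pb (f (-s))) with hwd
  obtain ⟨huc, ⟨Cu, huC⟩, huL, huP, hum, hue⟩ := hu u (fun t => rfl)
  obtain ⟨hwc, ⟨Cw, hwC⟩, hwL, hwP, hwm, hwe⟩ := hw w (fun t => rfl)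
  have hbI : ∀ t, IntegrableOn (fun s => Gb (s - t) (Pb (f s))) (Set.Ici t) := by
    intro t
    have h := ((integrable_indicator_iff measurableSet_Iic).2 (hwb (-t))).comp_neg
    rw [← integrable_indicator_iff measurableSet_Ici]
    refine h.congr (Filter.Eventually.of_forall fun s => ?_)
    by_cases hs : t ≤ s
    · simp [Set.indicator, hs, neg_add_eq_sub]
    · simp [Set.indicator, hs]
  have hbw : ∀ t, ∫ s in Set.Ici t, Gb (s - t) (Pb (f s)) = w (-t) := by
    intro t
    rw [integral_Ici_eq_integral_Ioi]
    have h := integral_comp_neg_Iic (-t) (fun s => Gb (s - t) (Pb (f s)))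
    rw [neg_neg] at h
    rw [← h, hwd]
    apply setIntegral_congr_fun measurableSet_Iic
    intro s _
    simp only
    congr 2
    ring
  have hsplit : ∀ t, (fun s => if s < t then Gs (t - s) (Ps (f s)) else -(Gb (s - t) (Pb (f s))))
      = fun s => (Set.Iio t).indicator (fun s => Gs (t - s) (Ps (f s))) s
        - (Set.Ici t).indicator (fun s => Gb (s - t) (Pb (f s))) s := by
    intro t
    funext s
    by_cases hs : s < t
    · simp [Set.indicator, hs, not_le.2 hs]
    · simp [Set.indicator, hs, not_lt.1 hs]
  have hI1 : ∀ t, Integrable ((Set.Iio t).indicator (fun s => Gs (t - s) (Ps (f s)))) := fun t =>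
    (integrable_indicator_iff measurableSet_Iio).2 ((hus t).mono_set Set.Iio_subset_Iic_self)
  have hI2 : ∀ t, Integrable ((Set.Ici t).indicator (fun s => Gb (s - t) (Pb (f s)))) := fun t =>
    (integrable_indicator_iff measurableSet_Ici).2 (hbI t)
  refine ⟨fun t => ?_, ?_⟩
  · rw [hsplit t]
    exact (hI1 t).sub (hI2 t)
  intro z hz
  have hzuw : ∀ t, z t = u t - w (-t) := by
    intro t
    rw [hz, hsplit t, integral_sub (hI1 t) (hI2 t), integral_indicator measurableSet_Iio,
      integral_indicator measurableSet_Ici, hbw, ← integral_Iic_eq_integral_Iio]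
  have hzP : ∀ t, Ps (z t) = u t := by
    intro t
    rw [hzuw, map_sub, huP, ← hwP, hPsb, sub_zero]
  have hzQ : ∀ t, Pb (z t) = -w (-t) := by
    intro t
    rw [hzuw, map_sub, hwP, ← huP, hPbs, zero_sub]
  have hmp := Measure.measurePreserving_neg (volume : Measure ℝ)
  refine ⟨?_, ⟨Cu + Cw, ?_⟩, ?_, ?_, ?_, ?_⟩
  · rw [funext hzuw]
    exact huc.sub (hwc.comp continuous_neg)
  · intro t
    rw [hzuw]
    exact (norm_sub_le _ _).trans (add_le_add (huC _) (hwC _))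
  · rw [funext hzuw]
    exact huL.sub (hwL.comp_measurePreserving hmp)
  · intro s t ht
    constructor
    · rw [hzP, hzP]
      exact hum s t ht
    · rw [hzQ, hzQ, hwm (-s) t ht]
      have h := intervalIntegral.integral_comp_neg (a := -s - t) (b := -s)
        (fun θ => Gb (θ - s) (Pb (f θ)))
      have e1 : -(-s - t) = s + t := by ring
      rw [neg_neg, e1] at h
      have e2 : -(s + t) = -s - t := by ring
      have e3 : ∀ θ, -s - θ = -θ - s := fun θ => by ring
      rw [← h, e2, map_neg]
      simp only [e3]
      abel
  · simp only [hzP]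
    exact hue
  · simp only [hzQ]
    have h1 : eLpNorm (fun t => -w (-t)) 2 volume = eLpNorm w 2 volume := by
      have h3 : eLpNorm (w ∘ Neg.neg) 2 volume = eLpNorm w 2 volume :=
        eLpNorm_comp_measurePreserving hwL.1 hmp
      rw [← h3, ← eLpNorm_neg (w ∘ Neg.neg)]
      congr 1
    have h2 : eLpNorm (fun t => Pb (f (-t))) 2 volume = eLpNorm (fun t => Pb (f t)) 2 volume :=
      eLpNorm_comp_measurePreserving (g := fun t => Pb (f t)) (Pb.comp_memLp' hf).1 hmp
    rw [h1, ← h2]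
    exact hwe
end

section
/- In the exponential dichotomy setting, let f ∈ L²(ℝ; H) and let z : ℝ → H be a mild dichotomous solution of the inhomogeneous equation with inhomogeneity f. If z ∈ L²(ℝ; H) (with the defining relations holding for almost every s), or if z is bounded and continuous on ℝ, then z coincides (almost everywhere, respectively everywhere) with the function t ↦ ∫_{−∞}^{t} G♯(t − s) Π♯ f(s) ds − ∫_{t}^{∞} G♭(s − t) Π♭ f(s) ds. -/
open MeasureTheory

lemma aux_freq {H : Type*} [NormedAddCommGroup H] (w : ℝ → H)
    (hw : MemLp w 2 (volume : Measure ℝ)) : ∃ᶠ t in Filter.atTop, ‖w t‖ ≤ 1 := by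
  intro hcon
  obtain ⟨T, hT⟩ := Filter.eventually_atTop.1 hcon
  have h1 : Integrable (fun t => ‖w t‖ ^ 2) volume := by
    simpa using hw.integrable_norm_pow (by norm_num)
  have h2 : IntegrableOn (fun _ : ℝ => (1 : ℝ)) (Set.Ioi T) volume := by
    refine Integrable.mono' (h1.integrableOn (s := Set.Ioi T)) aestronglyMeasurable_const ?_
    filter_upwards [ae_restrict_mem measurableSet_Ioi] with t ht
    have := hT t (le_of_lt ht)
    push Not at this
    simp only [norm_one]
    nlinarith
  rw [integrableOn_const_iff] at h2
  simp at h2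

lemma aux_zero {H : Type*} [NormedAddCommGroup H] (u w : ℝ → H) (L : H) (C ε B : ℝ)
    (hC : 0 ≤ C) (hε : 0 < ε) (hu : Filter.Tendsto u Filter.atTop (nhds L))
    (hb : ∀ t, 0 ≤ t → ‖u t‖ ≤ C * Real.exp (-ε * t) * ‖w t‖)
    (hw : ∃ᶠ t in Filter.atTop, ‖w t‖ ≤ B) : L = 0 := by
  by_contra hL
  have hL' : 0 < ‖L‖ := norm_pos_iff.2 hL
  have h1 : ∀ᶠ t in Filter.atTop, ‖L‖ / 2 < ‖u t‖ :=
    hu.norm.eventually (lt_mem_nhds (by linarith))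
  have h2 : Filter.Tendsto (fun t : ℝ => C * Real.exp (-ε * t) * B) Filter.atTop (nhds (C * 0 * B)) := by
    refine Filter.Tendsto.mul_const _ (Filter.Tendsto.const_mul _ ?_)
    refine Real.tendsto_exp_atBot.comp ?_
    exact Filter.tendsto_id.const_mul_atTop_of_neg (by linarith)
  have h3 := h2.eventually (gt_mem_nhds (show C * 0 * B < ‖L‖ / 2 by rw [mul_zero, zero_mul]; linarith))
  obtain ⟨t, ht, h1, h3, h4⟩ := (hw.and_eventually (h1.and (h3.and (Filter.eventually_ge_atTop 0)))).exists
  have h5 := hb t h4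
  have h6 : C * Real.exp (-ε * t) * ‖w t‖ ≤ C * Real.exp (-ε * t) * B :=
    mul_le_mul_of_nonneg_left ht (by positivity)
  linarith

lemma aux_cont {H : Type*} [NormedAddCommGroup H] [NormedSpace ℝ H]
    (K : ℝ → H →L[ℝ] H) (C ε : ℝ) (hC : 0 ≤ C) (hε : 0 < ε)
    (hK : ∀ x, ContinuousOn (fun t => K t x) (Set.Ici (0 : ℝ)))
    (hd : ∀ t, 0 ≤ t → ∀ x, ‖K t x‖ ≤ C * Real.exp (-ε * t) * ‖x‖) :
    Continuous (fun p : H × ℝ => K (max p.2 0) p.1) := by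
  have hd' : ∀ t, 0 ≤ t → ∀ x, ‖K t x‖ ≤ C * ‖x‖ := fun t ht x => by
    refine (hd t ht x).trans ?_
    have : Real.exp (-ε * t) ≤ 1 := Real.exp_le_one_iff.2 (by nlinarith)
    have := mul_le_mul_of_nonneg_left this hC
    exact mul_le_mul_of_nonneg_right (by linarith) (norm_nonneg x)
  refine continuous_prod_of_continuous_lipschitzWith _ ⟨C, hC⟩ ?_ ?_
  · intro x
    exact (hK x).comp_continuous (continuous_id.max continuous_const) (fun t => Set.mem_Ici.2 (le_max_right _ _))
  · intro t
    refine LipschitzWith.of_dist_le_mul fun x y => ?_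
    simp only [dist_eq_norm, ← map_sub]
    exact hd' _ (le_max_right _ _) _

lemma aux_int {H : Type*} [NormedAddCommGroup H] [NormedSpace ℝ H]
    (K : ℝ → H →L[ℝ] H) (C ε : ℝ) (hC : 0 ≤ C) (hε : 0 < ε)
    (hK : ∀ x, ContinuousOn (fun t => K t x) (Set.Ici (0 : ℝ)))
    (hd : ∀ t, 0 ≤ t → ∀ x, ‖K t x‖ ≤ C * Real.exp (-ε * t) * ‖x‖)
    (f : ℝ → H) (hf : MemLp f 2 (volume : Measure ℝ)) (φ : ℝ → ℝ) (hφ : Continuous φ)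
    (S : Set ℝ) (hS : MeasurableSet S) (hpos : ∀ t ∈ S, 0 ≤ φ t)
    (he : IntegrableOn (fun t => Real.exp (-(2 * ε) * φ t)) S volume) :
    IntegrableOn (fun t => K (φ t) (f t)) S volume := by
  have h1 : Integrable (fun t => ‖f t‖ ^ 2) volume := by
    simpa using hf.integrable_norm_pow (by norm_num)
  have h2 : IntegrableOn (fun t => C * (Real.exp (-(2 * ε) * φ t) + ‖f t‖ ^ 2)) S volume :=
    (he.add h1.integrableOn).const_mul C
  refine Integrable.mono' h2 ?_ ?_
  · have h3 : AEStronglyMeasurable (fun t => K (max (φ t) 0) (f t)) (volume.restrict S) :=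
      (aux_cont K C ε hC hε hK hd).comp_aestronglyMeasurable
        (hf.1.restrict.prodMk hφ.aestronglyMeasurable)
    refine h3.congr ?_
    filter_upwards [ae_restrict_mem hS] with t ht
    rw [max_eq_left (hpos t ht)]
  · filter_upwards [ae_restrict_mem hS] with t ht
    refine (hd _ (hpos t ht) _).trans ?_
    have h4 : Real.exp (-(2 * ε) * φ t) = Real.exp (-ε * φ t) ^ 2 := by
      rw [← Real.exp_nat_mul]; congr 1; push_cast; ring
    rw [h4, mul_assoc]
    refine mul_le_mul_of_nonneg_left ?_ hC
    nlinarith [sq_nonneg (Real.exp (-ε * φ t) - ‖f t‖), sq_nonneg (Real.exp (-ε * φ t)), sq_nonneg ‖f t‖]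

lemma aux_sharp {H : Type*} [NormedAddCommGroup H] [NormedSpace ℝ H] [CompleteSpace H]
    (K : ℝ → H →L[ℝ] H) (C ε : ℝ) (hC : 0 ≤ C) (hε : 0 < ε)
    (hK : ∀ x, ContinuousOn (fun t => K t x) (Set.Ici (0 : ℝ)))
    (hd : ∀ t, 0 ≤ t → ∀ x, ‖K t x‖ ≤ C * Real.exp (-ε * t) * ‖x‖)
    (f : ℝ → H) (hf : MemLp f 2 (volume : Measure ℝ)) (s B : ℝ) (a : H) (z : ℝ → H)
    (h : ∀ t, 0 ≤ t → a = K t (z (s - t)) + ∫ θ in (s - t)..s, K (s - θ) (f θ))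
    (hw : ∃ᶠ t in Filter.atTop, ‖z (s - t)‖ ≤ B) :
    a = ∫ θ in Set.Iic s, K (s - θ) (f θ) := by
  have hi : IntegrableOn (fun θ => K (s - θ) (f θ)) (Set.Iic s) volume := by
    refine aux_int K C ε hC hε hK hd f hf (fun θ => s - θ) (by fun_prop) _ measurableSet_Iic
      (fun t ht => sub_nonneg.2 ht) ?_
    have := (integrableOn_exp_mul_Iic (a := 2 * ε) (by linarith) s).const_mul (Real.exp (-(2 * ε) * s))
    refine this.congr (Filter.Eventually.of_forall fun t => ?_)
    simp only [← Real.exp_add]; congr 1; ring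
  have hl := intervalIntegral_tendsto_integral_Iic s hi
    (Filter.tendsto_atBot_add_const_left Filter.atTop s Filter.tendsto_neg_atTop_atBot)
  refine sub_eq_zero.1 (aux_zero _ (fun t => z (s - t)) _ C ε B hC hε (hl.const_sub a) ?_ hw)
  intro t ht
  have h' := h t ht
  have : a - ∫ θ in (s + -t)..s, K (s - θ) (f θ) = K t (z (s - t)) := by
    rw [← sub_eq_add_neg, sub_eq_iff_eq_add]; exact h'
  rw [this]
  exact hd t ht _

lemma aux_flat {H : Type*} [NormedAddCommGroup H] [NormedSpace ℝ H] [CompleteSpace H]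
    (K : ℝ → H →L[ℝ] H) (C ε : ℝ) (hC : 0 ≤ C) (hε : 0 < ε)
    (hK : ∀ x, ContinuousOn (fun t => K t x) (Set.Ici (0 : ℝ)))
    (hd : ∀ t, 0 ≤ t → ∀ x, ‖K t x‖ ≤ C * Real.exp (-ε * t) * ‖x‖)
    (f : ℝ → H) (hf : MemLp f 2 (volume : Measure ℝ)) (s B : ℝ) (a : H) (z : ℝ → H)
    (h : ∀ t, 0 ≤ t → a = K t (z (s + t)) - ∫ θ in s..(s + t), K (θ - s) (f θ))
    (hw : ∃ᶠ t in Filter.atTop, ‖z (s + t)‖ ≤ B) :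
    a = - ∫ θ in Set.Ioi s, K (θ - s) (f θ) := by
  have hi : IntegrableOn (fun θ => K (θ - s) (f θ)) (Set.Ioi s) volume := by
    refine aux_int K C ε hC hε hK hd f hf (fun θ => θ - s) (by fun_prop) _ measurableSet_Ioi
      (fun t ht => sub_nonneg.2 (le_of_lt ht)) ?_
    have := (integrableOn_exp_mul_Ioi (a := -(2 * ε)) (by linarith) s).const_mul (Real.exp (2 * ε * s))
    refine this.congr (Filter.Eventually.of_forall fun t => ?_)
    simp only [← Real.exp_add]; congr 1; ring
  have hl := intervalIntegral_tendsto_integral_Ioi s hi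
    (Filter.tendsto_atTop_add_const_left Filter.atTop s Filter.tendsto_id)
  refine eq_neg_of_add_eq_zero_left
    (aux_zero _ (fun t => z (s + t)) _ C ε B hC hε (hl.const_add a) ?_ hw)
  intro t ht
  have h' := h t ht
  have : a + ∫ θ in s..(s + id t), K (θ - s) (f θ) = K t (z (s + t)) := by
    rw [id, ← eq_sub_iff_add_eq]; exact h'
  rw [this]
  exact hd t ht _

/-- exponential dichotomy setting.  Let `f ∈ L²(ℝ; H)` and let
`z : ℝ → H` be a mild dichotomous solution of the inhomogeneous equation with
inhomogeneity `f`, i.e. for all (resp. a.e.) `s` and all `t ≥ 0`: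
`Ps z(s) = Gs(t) Ps z(s-t) + ∫_{s-t}^{s} Gs(s-θ) Ps f(θ) dθ` and
`Pb z(s) = Gb(t) Pb z(s+t) - ∫_{s}^{s+t} Gb(θ-s) Pb f(θ) dθ`.
If `z ∈ L²(ℝ; H)` (relations a.e.) or `z` is bounded and continuous, then `z`
coincides (a.e., resp. everywhere) with
`t ↦ ∫_{-∞}^{t} Gs(t-s) Ps f(s) ds − ∫_{t}^{∞} Gb(s-t) Pb f(s) ds`. -/
theorem stmt10 {H : Type*} [NormedAddCommGroup H] [InnerProductSpace ℝ H] [CompleteSpace H]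
    (Hs Hb : Submodule ℝ H) (hHsC : IsClosed (Hs : Set H)) (hHbC : IsClosed (Hb : Set H))
    (hdisj : Hs ⊓ Hb = ⊥) (hspan : Hs ⊔ Hb = ⊤)
    (Ps Pb : H →L[ℝ] H)
    (hPs_mem : ∀ x, Ps x ∈ Hs) (hPb_mem : ∀ x, Pb x ∈ Hb)
    (hsum : ∀ x, Ps x + Pb x = x)
    (hPs_id : ∀ x ∈ Hs, Ps x = x) (hPb_id : ∀ x ∈ Hb, Pb x = x)
    (Gs Gb : ℝ → H →L[ℝ] H)
    (hGs0 : ∀ x ∈ Hs, Gs 0 x = x) (hGb0 : ∀ x ∈ Hb, Gb 0 x = x)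
    (hGs_mem : ∀ t, 0 ≤ t → ∀ x ∈ Hs, Gs t x ∈ Hs)
    (hGb_mem : ∀ t, 0 ≤ t → ∀ x ∈ Hb, Gb t x ∈ Hb)
    (hGs_sg : ∀ t, 0 ≤ t → ∀ s, 0 ≤ s → ∀ x ∈ Hs, Gs (t + s) x = Gs t (Gs s x))
    (hGb_sg : ∀ t, 0 ≤ t → ∀ s, 0 ≤ s → ∀ x ∈ Hb, Gb (t + s) x = Gb t (Gb s x))
    (hGs_cont : ∀ x ∈ Hs, ContinuousOn (fun t => Gs t x) (Set.Ici (0 : ℝ)))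
    (hGb_cont : ∀ x ∈ Hb, ContinuousOn (fun t => Gb t x) (Set.Ici (0 : ℝ)))
    (M ε : ℝ) (hM : 0 < M) (hε : 0 < ε)
    (hGs_decay : ∀ t, 0 ≤ t → ∀ x ∈ Hs, ‖Gs t x‖ ≤ M * Real.exp (-ε * t) * ‖x‖)
    (hGb_decay : ∀ t, 0 ≤ t → ∀ x ∈ Hb, ‖Gb t x‖ ≤ M * Real.exp (-ε * t) * ‖x‖)
    (f : ℝ → H) (hf : MemLp f 2 (volume : Measure ℝ)) :
    (∀ z : ℝ → H, MemLp z 2 (volume : Measure ℝ) →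
      (∀ᵐ s ∂(volume : Measure ℝ), ∀ t : ℝ, 0 ≤ t →
        Ps (z s) = Gs t (Ps (z (s - t))) + ∫ θ in (s - t)..s, Gs (s - θ) (Ps (f θ)) ∧
        Pb (z s) = Gb t (Pb (z (s + t))) - ∫ θ in s..(s + t), Gb (θ - s) (Pb (f θ))) →
      (∀ᵐ t ∂(volume : Measure ℝ), z t =
        (∫ s in Set.Iic t, Gs (t - s) (Ps (f s)) ∂(volume : Measure ℝ)) -
        (∫ s in Set.Ioi t, Gb (s - t) (Pb (f s)) ∂(volume : Measure ℝ)))) ∧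
    (∀ z : ℝ → H, Continuous z → (∃ C, ∀ t, ‖z t‖ ≤ C) →
      (∀ s : ℝ, ∀ t : ℝ, 0 ≤ t →
        Ps (z s) = Gs t (Ps (z (s - t))) + ∫ θ in (s - t)..s, Gs (s - θ) (Ps (f θ)) ∧
        Pb (z s) = Gb t (Pb (z (s + t))) - ∫ θ in s..(s + t), Gb (θ - s) (Pb (f θ))) →
      (∀ t : ℝ, z t =
        (∫ s in Set.Iic t, Gs (t - s) (Ps (f s)) ∂(volume : Measure ℝ)) -
        (∫ s in Set.Ioi t, Gb (s - t) (Pb (f s)) ∂(volume : Measure ℝ)))) := by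
  have hdec : ∀ (P : H →L[ℝ] H) (V : Submodule ℝ H) (G : ℝ → H →L[ℝ] H), (∀ x, P x ∈ V) →
      (∀ t, 0 ≤ t → ∀ x ∈ V, ‖G t x‖ ≤ M * Real.exp (-ε * t) * ‖x‖) →
      ∀ t, 0 ≤ t → ∀ x, ‖((G t).comp P) x‖ ≤ (M * ‖P‖) * Real.exp (-ε * t) * ‖x‖ := by
    intro P V G hP hG t ht x
    refine (hG t ht _ (hP x)).trans ?_
    calc M * Real.exp (-ε * t) * ‖P x‖ ≤ M * Real.exp (-ε * t) * (‖P‖ * ‖x‖) :=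
          mul_le_mul_of_nonneg_left (P.le_opNorm x) (by positivity)
      _ = _ := by ring
  have key : ∀ (z : ℝ → H) (s B : ℝ), (∀ t : ℝ, 0 ≤ t →
        Ps (z s) = Gs t (Ps (z (s - t))) + ∫ θ in (s - t)..s, Gs (s - θ) (Ps (f θ)) ∧
        Pb (z s) = Gb t (Pb (z (s + t))) - ∫ θ in s..(s + t), Gb (θ - s) (Pb (f θ))) →
      (∃ᶠ t in Filter.atTop, ‖z (s - t)‖ ≤ B) → (∃ᶠ t in Filter.atTop, ‖z (s + t)‖ ≤ B) →
      z s = (∫ θ in Set.Iic s, Gs (s - θ) (Ps (f θ)) ∂(volume : Measure ℝ)) -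
        (∫ θ in Set.Ioi s, Gb (θ - s) (Pb (f θ)) ∂(volume : Measure ℝ)) := by
    intro z s B h h1 h2
    have e1 := aux_sharp (fun t => (Gs t).comp Ps) (M * ‖Ps‖) ε (by positivity) hε
      (fun x => hGs_cont _ (hPs_mem x)) (hdec Ps Hs Gs hPs_mem hGs_decay) f hf s B (Ps (z s)) z
      (fun t ht => (h t ht).1) h1
    have e2 := aux_flat (fun t => (Gb t).comp Pb) (M * ‖Pb‖) ε (by positivity) hε
      (fun x => hGb_cont _ (hPb_mem x)) (hdec Pb Hb Gb hPb_mem hGb_decay) f hf s B (Pb (z s)) z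
      (fun t ht => (h t ht).2) h2
    simp only [ContinuousLinearMap.comp_apply] at e1 e2
    rw [← hsum (z s), e1, e2, sub_eq_add_neg]
  refine ⟨fun z hz h => ?_, fun z _ ⟨C, hC⟩ h t => ?_⟩
  · filter_upwards [h] with s hs
    refine key z s 1 hs (aux_freq _ ?_) (aux_freq _ ?_)
    · exact hz.comp_measurePreserving (Measure.measurePreserving_sub_left volume s)
    · exact hz.comp_measurePreserving (measurePreserving_add_left volume s)
  · exact key z t C (h t) (Filter.Eventually.of_forall fun _ => hC _).frequently
      (Filter.Eventually.of_forall fun _ => hC _).frequently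
end

section
/- Let H be a real Hilbert space and set L_η := {0} × H ⊆ H × H. Let L be a Lagrange subspace of H × H such that L ∩ L_η = {0} and such that there exists a finite-dimensional subspace L_c of H × H with L ⊕ L_c ⊕ L_η = H × H. Then there exists a bounded self-adjoint operator P ∈ L(H) such that L = { (v, −P v) : v ∈ H }. -/
open scoped RealInnerProductSpace

/-- The "vertical" subspace `L_η = {0} × H` of `H × H`. -/
noncomputable def Leta (H : Type*) [NormedAddCommGroup H] [InnerProductSpace ℝ H] :
    Submodule ℝ (WithLp 2 (H × H)) :=
  Submodule.comap (WithLp.linearEquiv 2 ℝ (H × H)).toLinearMap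
    ((⊥ : Submodule ℝ H).prod (⊤ : Submodule ℝ H))

/-- Let `L` be a Lagrange subspace of `H × H` with `L ∩ L_η = {0}`
such that there is a finite-dimensional subspace `L_c` with `L ⊕ L_c ⊕ L_η = H × H`.
Then there is a bounded self-adjoint operator `P` on `H` with
`L = { (v, -P v) : v ∈ H }`. -/
theorem stmt11 {H : Type*} [NormedAddCommGroup H] [InnerProductSpace ℝ H] [CompleteSpace H]
    (L : Submodule ℝ (WithLp 2 (H × H)))
    (hLC : IsClosed (L : Set (WithLp 2 (H × H)))) (hL : IsLagrange L)
    (hdisj : L ⊓ Leta H = ⊥)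
    (hLc : ∃ Lc : Submodule ℝ (WithLp 2 (H × H)), FiniteDimensional ℝ Lc ∧
      L ⊓ Lc = ⊥ ∧ Lc ⊓ Leta H = ⊥ ∧ L ⊔ Lc ⊔ Leta H = ⊤) :
    ∃ P : H →L[ℝ] H, (∀ u v : H, ⟪P u, v⟫ = ⟪u, P v⟫) ∧
      (∀ z : WithLp 2 (H × H), z ∈ L ↔
        (WithLp.equiv 2 (H × H) z).2 = -(P ((WithLp.equiv 2 (H × H) z).1))) := by
  have memeta : ∀ z : WithLp 2 (H × H), z ∈ Leta H ↔ z.fst = 0 := by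
    intro z
    simp [Leta, Submodule.mem_prod]
  have Japp : ∀ z : WithLp 2 (H × H), Jmap H z = WithLp.toLp 2 (-z.snd, z.fst) := by
    intro z
    rfl
  haveI : CompleteSpace L := hLC.completeSpace_coe
  let p : L →L[ℝ] H := (WithLp.fstL 2 ℝ H H).comp L.subtypeL
  let q : L →L[ℝ] H := (WithLp.sndL 2 ℝ H H).comp L.subtypeL
  have hp : ∀ x : L, p x = (x : WithLp 2 (H × H)).fst := fun x => rfl
  have hq : ∀ x : L, q x = (x : WithLp 2 (H × H)).snd := fun x => rfl
  have hker : p.ker = ⊥ := by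
    rw [Submodule.eq_bot_iff]
    intro x hx
    have hx0 : (x : WithLp 2 (H × H)).fst = 0 := hx
    have h : (x : WithLp 2 (H × H)) ∈ L ⊓ Leta H := ⟨x.2, (memeta _).2 hx0⟩
    rw [hdisj] at h
    exact Subtype.ext ((Submodule.mem_bot ℝ).1 h)
  have hclosed : IsClosed (p.range : Set H) := by
    obtain ⟨Lc, hfd, -, -, htop⟩ := hLc
    obtain ⟨G, hG⟩ := Submodule.exists_isCompl p.range
    haveI : FiniteDimensional ℝ (H ⧸ p.range) := by
      let g : Lc →ₗ[ℝ] (H ⧸ p.range) :=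
        p.range.mkQ ∘ₗ (WithLp.fstL 2 ℝ H H).toLinearMap ∘ₗ Lc.subtype
      refine Module.Finite.of_surjective g ?_
      intro y
      obtain ⟨v, rfl⟩ := Submodule.mkQ_surjective _ y
      have hv : (WithLp.toLp 2 (v, (0 : H))) ∈ L ⊔ Lc ⊔ Leta H := by
        rw [htop]; trivial
      obtain ⟨ab, hab, c, hc, h1⟩ := Submodule.mem_sup.1 hv
      obtain ⟨a, ha, b, hb, rfl⟩ := Submodule.mem_sup.1 hab
      refine ⟨⟨b, hb⟩, ?_⟩
      have h2 : a.fst + b.fst + c.fst = v := congrArg WithLp.fst h1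
      rw [(memeta c).1 hc, add_zero] at h2
      have h3 : p.range.mkQ a.fst = 0 := by
        rw [Submodule.mkQ_apply, Submodule.Quotient.mk_eq_zero]
        exact ⟨⟨a, ha⟩, rfl⟩
      rw [← h2, map_add, h3, zero_add]
      rfl
    haveI : FiniteDimensional ℝ G :=
      (Submodule.quotientEquivOfIsCompl _ _ hG).finiteDimensional
    exact p.closed_complemented_range_of_isCompl_of_ker_eq_bot G hG
      G.closed_of_finiteDimensional hker
  have hrange : p.range = ⊤ := by
    rw [← hclosed.submodule_topologicalClosure_eq, Submodule.topologicalClosure_eq_top_iff,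
      Submodule.eq_bot_iff]
    intro w hw
    have h1 : (WithLp.toLp 2 (w, (0 : H))) ∈ Lᗮ := by
      rw [Submodule.mem_orthogonal]
      intro u hu
      have := (Submodule.mem_orthogonal _ _).1 hw u.fst ⟨⟨u, hu⟩, rfl⟩
      rw [WithLp.prod_inner_apply]
      simpa using this
    rw [← hL] at h1
    obtain ⟨z, hz, hzw⟩ := h1
    rw [Japp] at hzw
    have hA : -z.snd = w := congrArg WithLp.fst hzw
    have hB : z.fst = 0 := congrArg WithLp.snd hzw
    have h : z ∈ L ⊓ Leta H := ⟨hz, (memeta _).2 hB⟩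
    rw [hdisj, Submodule.mem_bot] at h
    rw [← hA, h]
    simp
  let e := ContinuousLinearEquiv.ofBijective p hker hrange
  have he : ∀ v, (e.symm v : WithLp 2 (H × H)).fst = v := fun v =>
    ContinuousLinearEquiv.ofBijective_apply_symm_apply p hker hrange v
  have he' : ∀ x : L, e.symm (x : WithLp 2 (H × H)).fst = x := fun x =>
    ContinuousLinearEquiv.ofBijective_symm_apply_apply p hker hrange x
  let P : H →L[ℝ] H := -(q.comp e.symm.toContinuousLinearMap)
  have hP : ∀ v, P v = -(e.symm v : WithLp 2 (H × H)).snd := fun v => rfl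
  refine ⟨P, ?_, ?_⟩
  · intro u v
    have h1 : Jmap H (e.symm u : WithLp 2 (H × H)) ∈ Lᗮ := by
      rw [← hL]
      exact ⟨_, (e.symm u).2, rfl⟩
    have h2 := (Submodule.mem_orthogonal' _ _).1 h1 _ (e.symm v).2
    rw [Japp, WithLp.prod_inner_apply] at h2
    change ⟪-(e.symm u : WithLp 2 (H × H)).snd, (e.symm v : WithLp 2 (H × H)).fst⟫ +
      ⟪(e.symm u : WithLp 2 (H × H)).fst, (e.symm v : WithLp 2 (H × H)).snd⟫ = 0 at h2
    rw [he, he] at h2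
    rw [hP, hP, inner_neg_right]
    linarith
  · intro z
    change z ∈ L ↔ z.snd = -(P z.fst)
    rw [hP, neg_neg]
    constructor
    · intro hz
      rw [he' ⟨z, hz⟩]
    · intro h
      have : z = (e.symm z.fst : WithLp 2 (H × H)) := by
        apply (WithLp.equiv 2 (H × H)).injective
        exact Prod.ext (he z.fst).symm h
      rw [this]
      exact (e.symm z.fst).2
end
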